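/- Let $S_0 = k[x_0,\ldots,x_{n+e}]$, $J = (x_0,\ldots,x_{e-1})$, $u$ a monomial in $x_0,\ldots,x_{e-1}$ of degree $r$, and $I = (u) + J^{r+1}$. Then the graded Betti numbers of $I$ are: $\beta^{S_0}_{0,r}(I) = 1$; $\beta^{S_0}_{i,r+1}(I) = \binom{e+r}{i+r+1}\binom{r+i}{r} - \binom{e}{i+1}$ for $0 \le i \le e-1$; and all other $\beta^{S_0}_{ij}(I) = 0$. -/

import Mathlib

set_option synthInstance.maxHeartbeats 1000000
set_option maxHeartbeats 2000000

noncomputable section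

open MvPolynomial

namespace Paper

variable (k : Type) [Field k]

/-- The degree-`d` graded component of `S₀/I` as a `k`-subspace. -/
def quotComponent {N : ℕ} (I : Ideal (MvPolynomial (Fin N) k)) (d : ℕ) :
    Submodule k (MvPolynomial (Fin N) k ⧸ I) :=
  (MvPolynomial.homogeneousSubmodule (Fin N) k d).map
    (Ideal.Quotient.mkₐ k I).toLinearMap

/-- Hilbert function of `S₀/I`. -/
def hilbFn {N : ℕ} (I : Ideal (MvPolynomial (Fin N) k)) (d : ℕ) : ℕ :=
  Module.finrank k (quotComponent k I d)

/-- `I` is a homogeneous ideal. -/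
def IdealHomog {N : ℕ} (I : Ideal (MvPolynomial (Fin N) k)) : Prop :=
  ∀ f ∈ I, ∀ d : ℕ, MvPolynomial.homogeneousComponent d f ∈ I

/-- `I` is saturated with respect to the irrelevant maximal ideal. -/
def IsSaturatedIdeal {N : ℕ} (I : Ideal (MvPolynomial (Fin N) k)) : Prop :=
  ∀ f : MvPolynomial (Fin N) k, (∀ i : Fin N, MvPolynomial.X i * f ∈ I) → f ∈ I

/-- The subscheme defined by `I` is non-degenerate: `I` contains no nonzero linear form. -/
def Nondegenerate {N : ℕ} (I : Ideal (MvPolynomial (Fin N) k)) : Prop :=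
  ∀ f ∈ I, f.IsHomogeneous 1 → f = 0

/-- `S₀/I` has Hilbert polynomial of degree `n` and multiplicity (degree) `D`. -/
def HasDeg {N : ℕ} (I : Ideal (MvPolynomial (Fin N) k)) (n D : ℕ) : Prop :=
  ∃ P : Polynomial ℚ, P.natDegree = n ∧ (D : ℚ) = P.leadingCoeff * (n.factorial : ℚ) ∧
    ∀ᶠ d : ℕ in Filter.atTop, (hilbFn k I d : ℚ) = Polynomial.eval (d : ℚ) P

/-- The irrelevant maximal ideal of `S₀/I`. -/
def irrelevantIdeal {N : ℕ} (I : Ideal (MvPolynomial (Fin N) k)) :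
    Ideal (MvPolynomial (Fin N) k ⧸ I) :=
  Ideal.span (Set.range fun i : Fin N => Ideal.Quotient.mk I (MvPolynomial.X i))

/-- `S₀/I` is Cohen-Macaulay of dimension `c`: there is a regular sequence of length `c`
in the irrelevant maximal ideal. -/
def IsCMQuot {N : ℕ} (I : Ideal (MvPolynomial (Fin N) k)) (c : ℕ) : Prop :=
  ∃ rs : List (MvPolynomial (Fin N) k ⧸ I), rs.length = c ∧
    (∀ x ∈ rs, x ∈ irrelevantIdeal k I) ∧
    RingTheory.Sequence.IsRegular (MvPolynomial (Fin N) k ⧸ I) rs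

/-- The ideal of `R = S₀/I` generated by the images of `x_e, …, x_{N-1}`. -/
def tailVarsIdeal {N : ℕ} (e : ℕ) (I : Ideal (MvPolynomial (Fin N) k)) :
    Ideal (MvPolynomial (Fin N) k ⧸ I) :=
  Ideal.span {y | ∃ i : Fin N, e ≤ (i : ℕ) ∧ y = Ideal.Quotient.mk I (MvPolynomial.X i)}

/-- The reduction number `r_S(R)` of the Noether normalization by the last variables:
the least `t > 0` with `R_{t+1} = J_{t+1}` for `J = (x_e, …, x_{N-1})R`. -/
def reductionNumber {N : ℕ} (e : ℕ) (I : Ideal (MvPolynomial (Fin N) k)) : ℕ :=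
  sInf {t | 0 < t ∧ quotComponent k I (t + 1) ≤ (tailVarsIdeal k e I).restrictScalars k}

/-- The reduction number `r(R)`: the minimum of `r_J(R₊)` over all minimal reductions `J`
of `R₊`, i.e. ideals generated by `c = dim R` linear forms. -/
def redNumAll {N : ℕ} (I : Ideal (MvPolynomial (Fin N) k)) (c : ℕ) : ℕ :=
  sInf {t | 0 < t ∧ ∃ L : Finset (MvPolynomial (Fin N) k ⧸ I),
    (L : Set (MvPolynomial (Fin N) k ⧸ I)) ⊆ quotComponent k I 1 ∧ L.card = c ∧
    quotComponent k I (t + 1) ≤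
      (Ideal.span (L : Set (MvPolynomial (Fin N) k ⧸ I))).restrictScalars k}

/-- The `k`-algebra map `S = k[x_e, …, x_{N-1}] → R = S₀/I`. -/
def nnMap {N : ℕ} (e : ℕ) (I : Ideal (MvPolynomial (Fin N) k)) :
    MvPolynomial {i : Fin N // e ≤ (i : ℕ)} k →ₐ[k] (MvPolynomial (Fin N) k ⧸ I) :=
  MvPolynomial.aeval fun i => Ideal.Quotient.mk I (MvPolynomial.X i.1)

/-- `S = k[x_e, …, x_{N-1}] → R = S₀/I` is a Noether normalization. -/
def IsNoetherNormalization {N : ℕ} (e : ℕ) (I : Ideal (MvPolynomial (Fin N) k)) : Prop :=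
  Function.Injective (nnMap k e I) ∧ (nnMap k e I).toRingHom.Finite

/-- `μ_S(R) = dim_k R/S₊R`, the minimal number of generators of `R` as an `S`-module. -/
def muS {N : ℕ} (e : ℕ) (I : Ideal (MvPolynomial (Fin N) k)) : ℕ :=
  Module.finrank k ((MvPolynomial (Fin N) k ⧸ I) ⧸ tailVarsIdeal k e I)

/-- total degree of an exponent vector -/
def tdeg {N : ℕ} (a : Fin N →₀ ℕ) : ℕ := a.sum fun _ n => n

/-- degree reverse lexicographic order with `x_0 > x_1 > ⋯ > x_{N-1}`. -/
def drlLt {N : ℕ} (a b : Fin N →₀ ℕ) : Prop :=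
  tdeg a < tdeg b ∨
    (tdeg a = tdeg b ∧ ∃ i : Fin N, b i < a i ∧ ∀ j : Fin N, i < j → a j = b j)

/-- `m` is the leading (largest, w.r.t. degrevlex) exponent of `p`. -/
def IsLeadExp {N : ℕ} (p : MvPolynomial (Fin N) k) (m : Fin N →₀ ℕ) : Prop :=
  m ∈ p.support ∧ ∀ m' ∈ p.support, m' ≠ m → drlLt m' m

/-- The initial ideal of `I` with respect to the degree reverse lexicographic order. -/
def initialIdeal {N : ℕ} (I : Ideal (MvPolynomial (Fin N) k)) :
    Ideal (MvPolynomial (Fin N) k) :=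
  Ideal.span {q | ∃ p ∈ I, ∃ m, IsLeadExp k p m ∧ q = MvPolynomial.monomial m 1}

/-- `p` is homogeneous of degree `d ∈ ℤ` (`0` if `d < 0`). -/
def HomogOfDeg {σ : Type} (p : MvPolynomial σ k) (d : ℤ) : Prop :=
  p = 0 ∨ ∃ m : ℕ, (m : ℤ) = d ∧ p.IsHomogeneous m

/-- A minimal graded free resolution of the graded module `M` (with grading `Mdeg`) over
`A = k[σ]`, recording the graded Betti numbers `β i j = dim_k Tor_i^A(M,k)_{i+j}`:
the `i`-th free module has `β i j` generators in internal degree `i + j`. -/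
structure MinGradedFreeRes (σ : Type) (M : Type) [AddCommGroup M]
    [Module (MvPolynomial σ k) M] [Module k M] (Mdeg : ℤ → Submodule k M) where
  β : ℕ → ℤ → ℕ
  rowFinite : ∀ i, (Function.support (β i)).Finite
  d : ∀ i : ℕ, (((j : ℤ) × Fin (β (i + 1) j)) →₀ MvPolynomial σ k) →ₗ[MvPolynomial σ k]
      ((j : ℤ) × Fin (β i j)) →₀ MvPolynomial σ k
  ε : (((j : ℤ) × Fin (β 0 j)) →₀ MvPolynomial σ k) →ₗ[MvPolynomial σ k] M
  graded : ∀ (i : ℕ) (j j' : ℤ) (s : Fin (β (i + 1) j)) (s' : Fin (β i j')),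
      HomogOfDeg k (d i (Finsupp.single ⟨j, s⟩ 1) ⟨j', s'⟩) (j + 1 - j')
  minimal : ∀ (i : ℕ) (j j' : ℤ) (s : Fin (β (i + 1) j)) (s' : Fin (β i j')),
      j' = j + 1 → d i (Finsupp.single ⟨j, s⟩ 1) ⟨j', s'⟩ = 0
  eps_graded : ∀ (j : ℤ) (s : Fin (β 0 j)), ε (Finsupp.single ⟨j, s⟩ 1) ∈ Mdeg j
  eps_surj : Function.Surjective ε
  exact0 : Function.Exact (d 0) ε
  exactSeq : ∀ i : ℕ, Function.Exact (d (i + 1)) (d i)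

/-- `Mdeg` is a grading of the `k[σ]`-module `M`. -/
def IsGrading (σ : Type) (M : Type) [AddCommGroup M]
    [Module (MvPolynomial σ k) M] [Module k M] (Mdeg : ℤ → Submodule k M) : Prop :=
  (⨆ d, Mdeg d) = ⊤ ∧ iSupIndep Mdeg ∧
    ∀ (i : σ) (d : ℤ), ∀ x ∈ Mdeg d, (MvPolynomial.X i : MvPolynomial σ k) • x ∈ Mdeg (d + 1)

/-- The standard grading on `S₀/I` (indexed by `ℤ`). -/
def quotDeg {N : ℕ} (I : Ideal (MvPolynomial (Fin N) k)) (d : ℤ) :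
    Submodule k (MvPolynomial (Fin N) k ⧸ I) :=
  if 0 ≤ d then quotComponent k I d.toNat else ⊥

/-- The standard grading on a homogeneous ideal `I ⊆ S₀` (indexed by `ℤ`). -/
def idealDeg {N : ℕ} (I : Ideal (MvPolynomial (Fin N) k)) (d : ℤ) :
    Submodule k ↥I :=
  if 0 ≤ d then
    Submodule.comap ((I.subtype).restrictScalars k)
      (MvPolynomial.homogeneousSubmodule (Fin N) k d.toNat)
  else ⊥

/-- `χ_m = Σ_{j=0}^m (-1)^j β_{m-j,j}`. -/
def chiOf (β : ℕ → ℤ → ℕ) (m : ℤ) : ℤ :=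
  if m < 0 then 0
  else ∑ j ∈ Finset.range (m.toNat + 1), (-1 : ℤ) ^ j * (β (m.toNat - j) (j : ℤ) : ℤ)

/-- projective dimension read off from a minimal resolution's Betti table -/
def pdOf (β : ℕ → ℤ → ℕ) : ℕ∞ :=
  ⨆ i : {i : ℕ // ∃ j, β i j ≠ 0}, ((i : ℕ) : ℕ∞)

/-- index type of the variables `x_t, …, x_{N-1}` -/
def tailIdx (N t : ℕ) := {i : Fin N // t ≤ (i : ℕ)}


/-- The `S = k[x_e,…,x_{N-1}]`-module structure on `R = S₀/I` via `nnMap`. -/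
def nnModule {N : ℕ} (e : ℕ) (I : Ideal (MvPolynomial (Fin N) k)) :
    Module (MvPolynomial {i : Fin N // e ≤ (i : ℕ)} k) (MvPolynomial (Fin N) k ⧸ I) :=
  Module.compHom _ (nnMap k e I).toRingHom

/-- The underlying set of the `S`-submodule of `R = S₀/I` spanned by `s`. -/
def nnSpan {N : ℕ} (e : ℕ) (I : Ideal (MvPolynomial (Fin N) k))
    (s : Set (MvPolynomial (Fin N) k ⧸ I)) : Set (MvPolynomial (Fin N) k ⧸ I) :=
  letI := nnModule k e I
  (Submodule.span (MvPolynomial {i : Fin N // e ≤ (i : ℕ)} k) s : Set _)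

/-- The truncated ideal `(I)_{≥ r+1}`, generated by the homogeneous elements of `I`
of degree at least `r + 1`. -/
def truncIdeal {N : ℕ} (I : Ideal (MvPolynomial (Fin N) k)) (r : ℕ) :
    Ideal (MvPolynomial (Fin N) k) :=
  Ideal.span {f | f ∈ I ∧ ∃ d : ℕ, r + 1 ≤ d ∧ f.IsHomogeneous d}

end Paper

end

/-!
Splicing a minimal resolution of `I` with the inclusion of `I` in `S₀` gives a minimal resolution
`F` of `S₀/I`. The variables outside `J` form a regular sequence on `S₀/I`, and killing them leaves
a ring that is zero in degrees above `r`; following Koszul homology, one variable at a time, shows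
that the generators of `F i` have degree at most `r + i`. Minimality makes the degrees increase
along `F`, so those of `F i` for `i ≥ 1` have degree at least `r + i - 1`. Finally `u` is the only
generator of degree `r`, and a syzygy of degree `r + 1` would be a linear form annihilating `u`;
hence `F i` is generated in degree `r + i` for `i ≥ 2`. Each degree then contains the generators of
essentially one module `F i`, and the Betti numbers are, up to sign, the coefficients of the
numerator `1 - (1 - t) ^ e * (∑ d ≤ r, H d * t ^ d - t ^ r)` of the Hilbert series of `I`, where
`H d` counts the monomials of degree `d` in `e` variables.
-/

noncomputable section

namespace GradedBetti

section Homogeneous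

open MvPolynomial

variable {σ R : Type*} [CommSemiring R]

lemma weightedHomogeneousComponent_add_mul {M : Type*} [AddCancelCommMonoid M] {w : σ → M}
    {m n : M} (p : MvPolynomial σ R) {q : MvPolynomial σ R} (hq : IsWeightedHomogeneous w q m) :
    weightedHomogeneousComponent w (n + m) (p * q) = weightedHomogeneousComponent w n p * q := by
  classical
  induction p using MvPolynomial.induction_on' with
  | add p₁ p₂ h₁ h₂ => rw [add_mul, map_add, map_add, add_mul, h₁, h₂]
  | monomial a c =>
    have ha : IsWeightedHomogeneous w (monomial a c) (Finsupp.weight w a) :=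
      isWeightedHomogeneous_monomial w a c rfl
    rw [weightedHomogeneousComponent_of_mem ha, weightedHomogeneousComponent_of_mem (ha.mul hq)]
    simp only [add_left_inj, ite_mul, zero_mul]

lemma weight_one_int (a : σ →₀ ℕ) : Finsupp.weight (1 : σ → ℤ) a = a.degree := by
  simp [Finsupp.weight_apply, Finsupp.degree_apply, Finsupp.sum]

lemma isWeightedHomogeneous_int_iff {p : MvPolynomial σ R} {d : ℤ} :
    IsWeightedHomogeneous (1 : σ → ℤ) p d ↔ ∀ a ∈ p.support, (a.degree : ℤ) = d := by
  simp only [IsWeightedHomogeneous, weight_one_int, mem_support_iff]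

lemma isWeightedHomogeneous_int_of_isHomogeneous {p : MvPolynomial σ R} {m : ℕ}
    (hp : p.IsHomogeneous m) : IsWeightedHomogeneous (1 : σ → ℤ) p m := by
  refine isWeightedHomogeneous_int_iff.mpr fun a ha => ?_
  rw [Finsupp.degree_eq_weight_one]
  exact_mod_cast hp (mem_support_iff.mp ha)

lemma constantCoeff_eq_zero_of_isWeightedHomogeneous {p : MvPolynomial σ R} {d : ℤ}
    (hp : IsWeightedHomogeneous (1 : σ → ℤ) p d) (hd : d ≠ 0) : constantCoeff p = 0 := by
  by_contra h
  have := isWeightedHomogeneous_int_iff.mp hp 0 (mem_support_iff.mpr h)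
  simp_all

lemma pos_of_isWeightedHomogeneous_of_constantCoeff_eq_zero {p : MvPolynomial σ R} {d : ℤ}
    (hp : IsWeightedHomogeneous (1 : σ → ℤ) p d) (hp0 : p ≠ 0) (hc : constantCoeff p = 0) :
    0 < d := by
  obtain ⟨a, ha⟩ := support_nonempty.mpr hp0
  have hdeg : a.degree ≠ 0 := fun h => by
    rw [Finsupp.degree_eq_zero_iff] at h
    exact mem_support_iff.mp ha (h ▸ hc)
  rw [← isWeightedHomogeneous_int_iff.mp hp a ha]
  exact_mod_cast Nat.pos_of_ne_zero hdeg

end Homogeneous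

section MonomialIdeals

open MvPolynomial

variable {σ R : Type*} [CommSemiring R] {s t : Set (σ →₀ ℕ)} {Z : Set σ} {z : σ}
  {p : MvPolynomial σ R}

variable (R) in
/-- The ideal generated by the monomials whose exponents lie in `s`; it is spanned by the monomials
with exponents in `upperClosure s`. -/
def monomialIdeal (s : Set (σ →₀ ℕ)) : Ideal (MvPolynomial σ R) :=
  Ideal.span ((monomial · 1) '' s)

lemma mem_monomialIdeal_iff : p ∈ monomialIdeal R s ↔ ∀ a ∈ p.support, a ∈ upperClosure s :=
  mem_ideal_span_monomial_image

lemma monomialIdeal_union :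
    monomialIdeal R (s ∪ t) = monomialIdeal R s ⊔ monomialIdeal R t := by
  rw [monomialIdeal, Set.image_union, Ideal.span_union, monomialIdeal, monomialIdeal]

lemma weightedHomogeneousComponent_mem_monomialIdeal (hp : p ∈ monomialIdeal R s) {M : Type*}
    [AddCommMonoid M] (w : σ → M) (n : M) :
    weightedHomogeneousComponent w n p ∈ monomialIdeal R s := by
  classical
  rw [mem_monomialIdeal_iff] at hp ⊢
  intro a ha
  rw [support_weightedHomogeneousComponent] at ha
  exact hp a (Finset.mem_filter.mp ha).1

lemma X_mul_mem_monomialIdeal_iff (hz : ∀ a ∈ s, a z = 0) :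
    X z * p ∈ monomialIdeal R s ↔ p ∈ monomialIdeal R s := by
  classical
  refine ⟨fun h => ?_, fun h => Ideal.mul_mem_left _ _ h⟩
  rw [mem_monomialIdeal_iff] at h ⊢
  intro a ha
  obtain ⟨b, hb, hba⟩ := h (Finsupp.single z 1 + a) (by
    rwa [mem_support_iff, coeff_X_mul, ← mem_support_iff])
  refine ⟨b, hb, fun i => ?_⟩
  rcases eq_or_ne z i with rfl | hne
  · exact (hz b hb).trans_le zero_le
  · simpa [Finsupp.single_eq_of_ne' hne] using hba i

variable (R) in
/-- The ideal generated by a set of variables. -/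
def varIdeal (Z : Set σ) : Ideal (MvPolynomial σ R) :=
  Ideal.span (X '' Z)

lemma mem_varIdeal_iff : p ∈ varIdeal R Z ↔ ∀ a ∈ p.support, ∃ i ∈ Z, a i ≠ 0 :=
  mem_ideal_span_X_image

lemma varIdeal_empty : varIdeal R (∅ : Set σ) = ⊥ := by
  rw [varIdeal, Set.image_empty, Ideal.span_empty]

lemma varIdeal_mono {Z' : Set σ} (h : Z ⊆ Z') : varIdeal R Z ≤ varIdeal R Z' :=
  Ideal.span_mono (Set.image_mono h)

lemma mem_varIdeal_univ_iff : p ∈ varIdeal R Set.univ ↔ constantCoeff p = 0 := by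
  simp only [mem_varIdeal_iff, Set.mem_univ, true_and, constantCoeff_eq]
  rw [← notMem_support_iff]
  refine ⟨fun h h0 => by simpa using h 0 h0, fun h a ha => ?_⟩
  have ha0 : a ≠ 0 := fun ha0 => h (by rwa [ha0] at ha)
  exact Finsupp.ne_iff.mp ha0

lemma varIdeal_eq_monomialIdeal :
    varIdeal R Z = monomialIdeal R ((Finsupp.single · 1) '' Z) := by
  rw [monomialIdeal, Set.image_image]
  rfl

lemma X_mul_mem_varIdeal_iff (hz : z ∉ Z) : X z * p ∈ varIdeal R Z ↔ p ∈ varIdeal R Z := by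
  rw [varIdeal_eq_monomialIdeal]
  refine X_mul_mem_monomialIdeal_iff ?_
  rintro _ ⟨i, hi, rfl⟩
  exact Finsupp.single_eq_of_ne fun h => hz (h ▸ hi)

lemma varIdeal_pow_eq_monomialIdeal (Z : Set σ) (n : ℕ) :
    varIdeal R Z ^ n = monomialIdeal R {a | a.degree = n ∧ ↑a.support ⊆ Z} := by
  rw [varIdeal, Ideal.span, Submodule.span_pow, Finsupp.image_pow_eq_finsuppProd_image]
  simp [monomialIdeal, monomial_eq, Ideal.span]

lemma degree_eq_sum_of_support_subset {P : Finset σ} {m : σ →₀ ℕ} (hm : m.support ⊆ P) :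
    m.degree = ∑ i ∈ P, m i :=
  Finset.sum_subset hm fun _ _ hi => Finsupp.notMem_support_iff.mp hi

lemma mem_upperClosure_degree_eq_support_subset_iff {P : Finset σ} {n : ℕ} {m : σ →₀ ℕ} :
    m ∈ upperClosure {a : σ →₀ ℕ | a.degree = n ∧ ↑a.support ⊆ (P : Set σ)} ↔
      n ≤ ∑ i ∈ P, m i := by
  classical
  refine ⟨?_, fun hm => ?_⟩
  · rintro ⟨a, ⟨rfl, haP⟩, ham⟩
    rw [degree_eq_sum_of_support_subset (Finset.coe_subset.mp haP)]
    exact Finset.sum_le_sum fun i _ => ham i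
  · have hfilter : (m.filter (· ∈ P)).support ⊆ P := by
      rw [Finsupp.support_filter, Finset.filter_mem_eq_inter]
      exact Finset.inter_subset_right
    have hdeg : (m.filter (· ∈ P)).degree = ∑ i ∈ P, m i := by
      rw [degree_eq_sum_of_support_subset hfilter]
      exact Finset.sum_congr rfl fun i hi => Finsupp.filter_apply_pos _ m hi
    obtain ⟨a, ham, ha⟩ := Finsupp.exists_le_degree_eq (m.filter (· ∈ P)) n (hm.trans_eq hdeg.symm)
    refine ⟨a, ⟨ha, Finset.coe_subset.mpr ((Finsupp.support_mono ham).trans hfilter)⟩,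
      ham.trans fun i => ?_⟩
    rw [Finsupp.filter_apply]
    split_ifs <;> simp

end MonomialIdeals

section FreeModules

open MvPolynomial

variable {σ R ι κ : Type*} [CommRing R] {Z : Set σ} {z : σ} {x : ι →₀ MvPolynomial σ R}

/-- The homogeneous elements of degree `d` in the graded free module whose basis element `b` has
degree `deg b`; degrees are integers, so that twists by arbitrary shifts make sense. -/
def gradedPiece (deg : ι → ℤ) (d : ℤ) : Submodule R (ι →₀ MvPolynomial σ R) :=
  Finsupp.submodule fun b => weightedHomogeneousSubmodule R 1 (d - deg b)

lemma mem_gradedPiece_iff {deg : ι → ℤ} {d : ℤ} :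
    x ∈ gradedPiece deg d ↔ ∀ b, IsWeightedHomogeneous 1 (x b) (d - deg b) :=
  Iff.rfl

/-- The projection of a graded free module onto its homogeneous elements of degree `d`. -/
def gradedProj (deg : ι → ℤ) (d : ℤ) :
    (ι →₀ MvPolynomial σ R) →ₗ[R] (ι →₀ MvPolynomial σ R) :=
  Finsupp.lsum R fun b => Finsupp.lsingle b ∘ₗ weightedHomogeneousComponent 1 (d - deg b)

lemma gradedProj_single (deg : ι → ℤ) (d : ℤ) (b : ι) (p : MvPolynomial σ R) :
    gradedProj deg d (Finsupp.single b p) =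
      Finsupp.single b (weightedHomogeneousComponent 1 (d - deg b) p) := by
  simp [gradedProj]

lemma gradedProj_apply (deg : ι → ℤ) (d : ℤ) (x : ι →₀ MvPolynomial σ R) (b : ι) :
    gradedProj deg d x b = weightedHomogeneousComponent 1 (d - deg b) (x b) := by
  classical
  induction x using Finsupp.induction_linear with
  | zero => simp
  | add x y hx hy => simp only [map_add, Finsupp.add_apply, hx, hy]
  | single c p =>
    rw [gradedProj_single, Finsupp.single_apply, Finsupp.single_apply]
    split_ifs with h
    · rw [h]
    · rw [map_zero]

lemma gradedProj_mem_gradedPiece (deg : ι → ℤ) (d : ℤ) (x : ι →₀ MvPolynomial σ R) :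
    gradedProj deg d x ∈ gradedPiece deg d := fun b => by
  rw [gradedProj_apply]
  exact weightedHomogeneousComponent_mem _ _ _

lemma gradedProj_eq_self {deg : ι → ℤ} {d : ℤ} (hx : x ∈ gradedPiece deg d) :
    gradedProj deg d x = x := by
  ext1 b
  rw [gradedProj_apply, IsWeightedHomogeneous.weightedHomogeneousComponent_same (hx b)]

lemma gradedProj_smul (deg : ι → ℤ) (d : ℤ) {c : MvPolynomial σ R} {m : ℤ}
    (hc : IsWeightedHomogeneous 1 c m) (x : ι →₀ MvPolynomial σ R) :
    gradedProj deg d (c • x) = c • gradedProj deg (d - m) x := by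
  ext1 b
  rw [gradedProj_apply, Finsupp.smul_apply, Finsupp.smul_apply, gradedProj_apply, smul_eq_mul,
    smul_eq_mul, mul_comm, mul_comm c, ← weightedHomogeneousComponent_add_mul _ hc]
  congr 2
  ring

lemma gradedProj_X_smul (deg : ι → ℤ) (d : ℤ) (z : σ) (x : ι →₀ MvPolynomial σ R) :
    gradedProj deg d ((X z : MvPolynomial σ R) • x) =
      (X z : MvPolynomial σ R) • gradedProj deg (d - 1) x :=
  gradedProj_smul deg d (isWeightedHomogeneous_X R 1 z) x

lemma X_smul_mem_gradedPiece {deg : ι → ℤ} {d : ℤ} (hx : x ∈ gradedPiece deg (d - 1)) (z : σ) :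
    (X z : MvPolynomial σ R) • x ∈ gradedPiece deg d := by
  rw [← gradedProj_eq_self hx, ← gradedProj_X_smul]
  exact gradedProj_mem_gradedPiece deg d _

lemma single_mem_gradedPiece (deg : ι → ℤ) (b : ι) :
    Finsupp.single b 1 ∈ gradedPiece (R := R) (σ := σ) deg (deg b) := by
  classical
  refine mem_gradedPiece_iff.mpr fun c => ?_
  rw [Finsupp.single_apply]
  split_ifs with h
  · simpa only [h, sub_self] using isWeightedHomogeneous_one R 1
  · exact isWeightedHomogeneous_zero R 1 _

lemma gradedProj_map {degι : ι → ℤ} {degκ : κ → ℤ}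
    {f : (ι →₀ MvPolynomial σ R) →ₗ[MvPolynomial σ R] (κ →₀ MvPolynomial σ R)}
    (hf : ∀ b, f (Finsupp.single b 1) ∈ gradedPiece degκ (degι b)) (d : ℤ)
    (x : ι →₀ MvPolynomial σ R) :
    gradedProj degκ d (f x) = f (gradedProj degι d x) := by
  induction x using Finsupp.induction_linear with
  | zero => simp only [map_zero]
  | add x y hx hy => simp only [map_add, hx, hy]
  | single b p =>
    have hsingle (q : MvPolynomial σ R) : f (Finsupp.single b q) = q • f (Finsupp.single b 1) := by
      rw [← map_smul, Finsupp.smul_single_one]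
    ext1 c
    rw [gradedProj_single, hsingle p, hsingle (weightedHomogeneousComponent _ _ p),
      gradedProj_apply, Finsupp.smul_apply, Finsupp.smul_apply, smul_eq_mul, smul_eq_mul,
      ← weightedHomogeneousComponent_add_mul _ (hf b c), sub_add_sub_cancel]

lemma map_mem_gradedPiece {degι : ι → ℤ} {degκ : κ → ℤ}
    {f : (ι →₀ MvPolynomial σ R) →ₗ[MvPolynomial σ R] (κ →₀ MvPolynomial σ R)}
    (hf : ∀ b, f (Finsupp.single b 1) ∈ gradedPiece degκ (degι b)) {d : ℤ}
    (hx : x ∈ gradedPiece degι d) : f x ∈ gradedPiece degκ d := by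
  rw [← gradedProj_eq_self hx, ← gradedProj_map hf]
  exact gradedProj_mem_gradedPiece degκ d _

variable (R ι) in
/-- The submodule `(x_z : z ∈ Z) F` of the free module `F` on `ι`. -/
def varSubmodule (Z : Set σ) : Submodule (MvPolynomial σ R) (ι →₀ MvPolynomial σ R) :=
  Finsupp.submodule fun _ => varIdeal R Z

lemma mem_varSubmodule_iff : x ∈ varSubmodule R ι Z ↔ ∀ b, x b ∈ varIdeal R Z :=
  Iff.rfl

lemma varSubmodule_empty : varSubmodule R ι (∅ : Set σ) = ⊥ := by
  ext x
  simp only [mem_varSubmodule_iff, varIdeal_empty, Ideal.mem_bot, Submodule.mem_bot,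
    Finsupp.ext_iff, Finsupp.zero_apply]

lemma varSubmodule_mono {Z' : Set σ} (h : Z ⊆ Z') : varSubmodule R ι Z ≤ varSubmodule R ι Z' :=
  fun _ hx b => varIdeal_mono h (hx b)

lemma map_mem_varSubmodule
    (f : (ι →₀ MvPolynomial σ R) →ₗ[MvPolynomial σ R] (κ →₀ MvPolynomial σ R))
    (hx : x ∈ varSubmodule R ι Z) : f x ∈ varSubmodule R κ Z := by
  rw [← Finsupp.sum_single x, Finsupp.sum, map_sum]
  refine Submodule.sum_mem _ fun b _ => ?_
  rw [← Finsupp.smul_single_one, map_smul]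
  exact fun c => Ideal.mul_mem_right _ _ (hx b)

lemma gradedProj_mem_varSubmodule (deg : ι → ℤ) (d : ℤ) (hx : x ∈ varSubmodule R ι Z) :
    gradedProj deg d x ∈ varSubmodule R ι Z := fun b => by
  have hb : x b ∈ varIdeal R Z := hx b
  rw [varIdeal_eq_monomialIdeal] at hb
  rw [gradedProj_apply, varIdeal_eq_monomialIdeal]
  exact weightedHomogeneousComponent_mem_monomialIdeal hb _ _

lemma X_smul_mem_varSubmodule_iff (hz : z ∉ Z) :
    (X z : MvPolynomial σ R) • x ∈ varSubmodule R ι Z ↔ x ∈ varSubmodule R ι Z :=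
  forall_congr' fun _ => X_mul_mem_varIdeal_iff hz

lemma X_smul_mem_varSubmodule_insert (z : σ) (Z : Set σ) (x : ι →₀ MvPolynomial σ R) :
    (X z : MvPolynomial σ R) • x ∈ varSubmodule R ι (insert z Z) := fun _ =>
  Ideal.mul_mem_right _ _ (Ideal.subset_span ⟨z, Set.mem_insert z Z, rfl⟩)

lemma exists_sub_X_smul_mem_varSubmodule (hx : x ∈ varSubmodule R ι (insert z Z)) :
    ∃ y, x - (X z : MvPolynomial σ R) • y ∈ varSubmodule R ι Z := by
  have hsplit (b : ι) : ∃ q, x b - X z * q ∈ varIdeal R Z := by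
    have hb := hx b
    rw [varIdeal, Set.image_insert_eq, Ideal.mem_span_insert] at hb
    obtain ⟨q, p, hp, hqp⟩ := hb
    exact ⟨q, by rwa [hqp, mul_comm, add_sub_cancel_left]⟩
  choose q hq using hsplit
  refine ⟨∑ b ∈ x.support, Finsupp.single b (q b), ?_⟩
  nth_rw 1 [← Finsupp.sum_single x]
  rw [Finsupp.sum, Finset.smul_sum, ← Finset.sum_sub_distrib]
  refine Submodule.sum_mem _ fun b _ => ?_
  rw [Finsupp.smul_single, ← Finsupp.single_sub]
  intro c
  classical
  rw [Finsupp.single_apply]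
  split_ifs
  · exact hq b
  · exact zero_mem _

lemma exists_mem_gradedPiece_sub_X_smul_mem_varSubmodule {deg : ι → ℤ} {d : ℤ}
    (hx : x ∈ varSubmodule R ι (insert z Z)) (hxd : x ∈ gradedPiece deg d) :
    ∃ y ∈ gradedPiece deg (d - 1), x - (X z : MvPolynomial σ R) • y ∈ varSubmodule R ι Z := by
  obtain ⟨y, hy⟩ := exists_sub_X_smul_mem_varSubmodule hx
  refine ⟨gradedProj deg (d - 1) y, gradedProj_mem_gradedPiece deg _ y, ?_⟩
  have := gradedProj_mem_varSubmodule deg d hy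
  rwa [map_sub, gradedProj_eq_self hxd, gradedProj_X_smul] at this

end FreeModules

/-- A minimal graded free resolution, by modules of finite rank, of the cokernel of `d 0` over a
standard graded polynomial ring. The `i`-th module has a basis indexed by `ι i`, with `b : ι i` in
degree `deg i b`; minimality says that the matrices of the differentials have no constant terms. -/
structure MinimalFreeResolution (σ R : Type*) [CommRing R] where
  ι : ℕ → Type*
  finite : ∀ i, Finite (ι i)
  deg : ∀ i, ι i → ℤ
  d : ∀ i, (ι (i + 1) →₀ MvPolynomial σ R) →ₗ[MvPolynomial σ R] (ι i →₀ MvPolynomial σ R)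
  d_mem : ∀ i b, d i (Finsupp.single b 1) ∈ gradedPiece (deg i) (deg (i + 1) b)
  minimal : ∀ i b c, MvPolynomial.constantCoeff (d i (Finsupp.single b 1) c) = 0
  exact : ∀ i, Function.Exact (d (i + 1)) (d i)

namespace MinimalFreeResolution

open MvPolynomial

attribute [instance] MinimalFreeResolution.finite

variable {σ R : Type*} [CommRing R] (F : MinimalFreeResolution σ R)

section Koszul

/-- The cycles of `F ⊗ S/(x_z : z ∈ Z)` in spot `i`, lifted to `F`. -/
def cycles (Z : Set σ) : ∀ i, Submodule (MvPolynomial σ R) (F.ι i →₀ MvPolynomial σ R)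
  | 0 => ⊤
  | i + 1 => (varSubmodule R (F.ι i) Z).comap (F.d i)

/-- The boundaries of `F ⊗ S/(x_z : z ∈ Z)` in spot `i`, lifted to `F`. -/
def boundaries (Z : Set σ) (i : ℕ) : Submodule (MvPolynomial σ R) (F.ι i →₀ MvPolynomial σ R) :=
  LinearMap.range (F.d i) ⊔ varSubmodule R (F.ι i) Z

/-- The vanishing of the degree-`e` part of `Tor i (coker (d 0)) (S/(x_z : z ∈ Z))`. -/
def TorVanishes (Z : Set σ) (i : ℕ) (e : ℤ) : Prop :=
  ∀ x ∈ F.cycles Z i, x ∈ gradedPiece (F.deg i) e → x ∈ F.boundaries Z i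

variable {F} {Y Z : Set σ} {z : σ} {i : ℕ} {e r : ℤ}

lemma boundaries_mono {Z' : Set σ} (h : Z ⊆ Z') (i : ℕ) : F.boundaries Z i ≤ F.boundaries Z' i :=
  sup_le_sup_left (varSubmodule_mono h) _

lemma d_comp (i : ℕ) (x) : F.d i (F.d (i + 1) x) = 0 :=
  (F.exact i).apply_apply_eq_zero x

lemma mem_cycles_of_X_smul_sub_d_mem {y : F.ι i →₀ MvPolynomial σ R} (hz : z ∉ Z)
    (x : F.ι (i + 1) →₀ MvPolynomial σ R)
    (h : F.d i x - (X z : MvPolynomial σ R) • y ∈ varSubmodule R (F.ι i) Z) :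
    y ∈ F.cycles Z i := by
  cases i with
  | zero => trivial
  | succ i =>
    have := map_mem_varSubmodule (F.d i) h
    rw [map_sub, d_comp, zero_sub, neg_mem_iff, map_smul] at this
    exact (X_smul_mem_varSubmodule_iff hz).mp this

lemma exists_mem_gradedPiece_sub_d_mem_varSubmodule {y : F.ι i →₀ MvPolynomial σ R}
    (hy : y ∈ F.boundaries Z i) (hye : y ∈ gradedPiece (F.deg i) e) :
    ∃ w ∈ gradedPiece (F.deg (i + 1)) e, y - F.d i w ∈ varSubmodule R (F.ι i) Z := by
  obtain ⟨_, ⟨w, rfl⟩, m, hm, rfl⟩ := Submodule.mem_sup.mp hy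
  refine ⟨gradedProj _ e w, gradedProj_mem_gradedPiece _ e w, ?_⟩
  have := gradedProj_mem_varSubmodule (F.deg i) e hm
  rwa [← add_sub_cancel_left (F.d i w) m, map_sub, gradedProj_eq_self hye,
    gradedProj_map (F.d_mem i)] at this

-- The long exact Tor sequence of `0 → S/Z(-1) → S/Z → S/(Z, z) → 0`, `X z` acting in the middle.
lemma TorVanishes.succ_insert (hz : z ∉ Z) (h : F.TorVanishes Z (i + 1) e)
    (hinj : ∀ y ∈ gradedPiece (F.deg i) (e - 1), y ∈ F.cycles Z i →
      (X z : MvPolynomial σ R) • y ∈ F.boundaries Z i → y ∈ F.boundaries Z i) :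
    F.TorVanishes (insert z Z) (i + 1) e := by
  intro x hx hxe
  have hdx : F.d i x ∈ gradedPiece (F.deg i) e := map_mem_gradedPiece (F.d_mem i) hxe
  obtain ⟨y, hye, hy⟩ := exists_mem_gradedPiece_sub_X_smul_mem_varSubmodule hx hdx
  have hyb : y ∈ F.boundaries Z i := by
    refine hinj y hye (mem_cycles_of_X_smul_sub_d_mem hz x hy) ?_
    rw [← sub_sub_cancel (F.d i x) ((X z : MvPolynomial σ R) • y)]
    exact sub_mem (Submodule.mem_sup_left ⟨x, rfl⟩) (Submodule.mem_sup_right hy)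
  obtain ⟨w, hwe, hw⟩ := exists_mem_gradedPiece_sub_d_mem_varSubmodule hyb hye
  have hcycle : x - (X z : MvPolynomial σ R) • w ∈ F.cycles Z (i + 1) := by
    have := add_mem hy (Submodule.smul_mem _ (X z : MvPolynomial σ R) hw)
    rwa [smul_sub, sub_add_sub_cancel, ← map_smul, ← map_sub] at this
  have hbdry := h _ hcycle (sub_mem hxe (X_smul_mem_gradedPiece hwe z))
  rw [← sub_add_cancel x ((X z : MvPolynomial σ R) • w)]
  exact add_mem (boundaries_mono (Set.subset_insert z Z) _ hbdry)
    (Submodule.mem_sup_right (X_smul_mem_varSubmodule_insert z Z w))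

lemma TorVanishes.of_empty (i : ℕ) (e : ℤ) : F.TorVanishes ∅ (i + 1) e := by
  intro x hx _
  have hdx : F.d i x = 0 := by
    simpa only [cycles, varSubmodule_empty, Submodule.mem_comap, Submodule.mem_bot] using hx
  exact Submodule.mem_sup_left ((F.exact i x).mp hdx)

variable (F) in
/-- Every variable in `Y` is a nonzerodivisor on `coker (d 0)` modulo any others of them, that is,
the variables in `Y` form a regular sequence in any order. -/
def IsRegularVars (Y : Set σ) : Prop :=
  ∀ Z ⊆ Y, ∀ z ∈ Y \ Z, ∀ a : F.ι 0 →₀ MvPolynomial σ R,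
    (X z : MvPolynomial σ R) • a ∈ F.boundaries Z 0 → a ∈ F.boundaries Z 0

lemma IsRegularVars.mono {Y' : Set σ} (hY : F.IsRegularVars Y) (h : Y' ⊆ Y) :
    F.IsRegularVars Y' :=
  fun Z hZ z hz => hY Z (hZ.trans h) z ⟨h hz.1, hz.2⟩

lemma IsRegularVars.torVanishes (hY : F.IsRegularVars Y) (hfin : Y.Finite) (i : ℕ) (e : ℤ) :
    F.TorVanishes Y (i + 1) e := by
  induction Y, hfin using Set.Finite.induction_on generalizing i e with
  | empty => exact .of_empty i e
  | @insert z Z hz _ ih =>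
    have hvan := ih (hY.mono (Set.subset_insert z Z))
    refine (hvan i e).succ_insert hz fun y hye hy hzy => ?_
    cases i with
    | zero => exact hY Z (Set.subset_insert z Z) z ⟨Set.mem_insert z Z, hz⟩ y hzy
    | succ i => exact hvan i (e - 1) y hy hye

lemma TorVanishes.union (h : ∀ i : ℕ, ∀ e > r + i, F.TorVanishes Y i e) {W : Set σ}
    (hfin : W.Finite) (hdisj : Disjoint Y W) (i : ℕ) (he : e > r + i) :
    F.TorVanishes (W ∪ Y) i e := by
  induction W, hfin using Set.Finite.induction_on generalizing i e with
  | empty => simpa only [Set.empty_union] using h i e he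
  | @insert z W hz _ ih =>
    rw [Set.disjoint_insert_right] at hdisj
    cases i with
    | zero =>
      exact fun x _ hxe => boundaries_mono Set.subset_union_right 0 (h 0 e he x trivial hxe)
    | succ i =>
      rw [Set.insert_union]
      refine (ih hdisj.2 (i + 1) he).succ_insert (by simp [hz, hdisj.1]) fun y hye hy _ => ?_
      exact ih hdisj.2 i (by push_cast at he; linarith) y hy hye

end Koszul

section Minimality

variable {F} {i : ℕ}

lemma d_mem_varSubmodule_univ (i : ℕ) (x : F.ι (i + 1) →₀ MvPolynomial σ R) :
    F.d i x ∈ varSubmodule R (F.ι i) Set.univ := by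
  rw [← Finsupp.sum_single x, Finsupp.sum, map_sum]
  refine Submodule.sum_mem _ fun b _ => ?_
  rw [← Finsupp.smul_single_one, map_smul]
  exact Submodule.smul_mem _ _ fun c => mem_varIdeal_univ_iff.mpr (F.minimal i b c)

lemma single_notMem_boundaries_univ [Nontrivial R] (b : F.ι i) :
    Finsupp.single b 1 ∉ F.boundaries Set.univ i := by
  intro h
  have hle : F.boundaries Set.univ i ≤ varSubmodule R (F.ι i) Set.univ := by
    rw [boundaries, sup_le_iff, LinearMap.range_le_iff_comap, Submodule.eq_top_iff']
    exact ⟨d_mem_varSubmodule_univ i, le_rfl⟩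
  simpa using mem_varIdeal_univ_iff.mp (hle h b)

lemma d_single_ne_zero [Nontrivial R] (b : F.ι (i + 1)) : F.d i (Finsupp.single b 1) ≠ 0 := fun h =>
  single_notMem_boundaries_univ b (Submodule.mem_sup_left ((F.exact i _).mp h))

lemma deg_lt_of_d_apply_ne_zero {b : F.ι (i + 1)} {c : F.ι i}
    (h : F.d i (Finsupp.single b 1) c ≠ 0) : F.deg i c < F.deg (i + 1) b :=
  sub_pos.mp <|
    pos_of_isWeightedHomogeneous_of_constantCoeff_eq_zero (F.d_mem i b c) h (F.minimal i b c)

lemma exists_deg_lt [Nontrivial R] (b : F.ι (i + 1)) : ∃ c, F.deg i c < F.deg (i + 1) b := by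
  obtain ⟨c, hc⟩ := Finsupp.ne_iff.mp (d_single_ne_zero b)
  exact ⟨c, deg_lt_of_d_apply_ne_zero hc⟩

lemma le_deg_of_forall_le [Nontrivial R] {m : ℤ} {j : ℕ} (hij : i ≤ j)
    (h : ∀ b, m + i ≤ F.deg i b) (b : F.ι j) : m + j ≤ F.deg j b := by
  induction j, hij using Nat.le_induction with
  | base => exact h b
  | succ j _ ih =>
    obtain ⟨c, hc⟩ := exists_deg_lt b
    calc m + (j + 1 : ℕ) = m + j + 1 := by push_cast; ring
      _ ≤ F.deg j c + 1 := by gcongr; exact ih c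
      _ ≤ F.deg (j + 1) b := hc

-- A column of the matrix of `d` with a single nonzero entry would kill a basis element.
lemma exists_ne_deg_lt [IsDomain R] (b : F.ι (i + 2)) (c : F.ι (i + 1)) :
    ∃ c' ≠ c, F.deg (i + 1) c' < F.deg (i + 2) b := by
  by_contra! hdeg
  set p := F.d (i + 1) (Finsupp.single b 1) c
  have hp : F.d (i + 1) (Finsupp.single b 1) = Finsupp.single c p := by
    classical
    ext1 c'
    rw [Finsupp.single_apply]
    split_ifs with h
    · rw [← h]
    · by_contra hc'
      exact (deg_lt_of_d_apply_ne_zero hc').not_ge (hdeg c' (Ne.symm h))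
  have hpd : p • F.d i (Finsupp.single c 1) = 0 := by
    rw [← map_smul, Finsupp.smul_single_one, ← hp, d_comp]
  rcases smul_eq_zero.mp hpd with h | h
  · exact d_single_ne_zero b (by rw [hp, h, Finsupp.single_zero])
  · exact d_single_ne_zero c h

theorem deg_le_of_isRegularVars [Nontrivial R] [Finite σ] {Y : Set σ}
    (hY : F.IsRegularVars Y) {r : ℤ}
    (hr : ∀ e > r, F.TorVanishes Y 0 e) (b : F.ι i) : F.deg i b ≤ r + i := by
  have hvan : ∀ i : ℕ, ∀ e > r + i, F.TorVanishes Y i e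
    | 0, e, he => hr e (by simpa using he)
    | i + 1, e, _ => hY.torVanishes Y.toFinite i e
  by_contra! hb
  have hmem := TorVanishes.union hvan (Set.toFinite Yᶜ) disjoint_compl_right i hb
    (Finsupp.single b 1)
  rw [Set.compl_union_self] at hmem
  refine single_notMem_boundaries_univ b (hmem ?_ (single_mem_gradedPiece _ b))
  cases i with
  | zero => trivial
  | succ i => exact d_mem_varSubmodule_univ i _

end Minimality

section MonomialQuotients

variable {σ R : Type*} [CommRing R] {F : MinimalFreeResolution σ R} [Unique (F.ι 0)]
  {I : Ideal (MvPolynomial σ R)} {s : Set (σ →₀ ℕ)} {Y Z : Set σ} {i : ℕ}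

variable (F I) in
/-- `F` resolves `S/I`, where `S` is the polynomial ring: the module in spot `0` is `S` with its
standard grading, and the image of `d 0` in it is `I`. -/
structure ResolvesQuotient : Prop where
  deg_default : F.deg 0 default = 0
  mem_range_iff : ∀ a, a ∈ LinearMap.range (F.d 0) ↔ a default ∈ I

namespace ResolvesQuotient

lemma mem_boundaries_zero_iff (hF : F.ResolvesQuotient I) {a : F.ι 0 →₀ MvPolynomial σ R} :
    a ∈ F.boundaries Z 0 ↔ a default ∈ I ⊔ varIdeal R Z := by
  simp only [boundaries, Submodule.mem_sup]
  constructor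
  · rintro ⟨x, hx, y, hy, rfl⟩
    exact ⟨x default, (hF.mem_range_iff x).mp hx, y default, hy default, rfl⟩
  · rintro ⟨p, hp, q, hq, hpq⟩
    refine ⟨Finsupp.single default p, ?_, Finsupp.single default q, fun b => ?_, ?_⟩
    · rwa [hF.mem_range_iff, Finsupp.single_eq_same]
    · rwa [Unique.eq_default b, Finsupp.single_eq_same]
    · rw [← Finsupp.single_add, hpq, ← Finsupp.unique_single]

lemma mem_boundaries_zero_iff_of_monomialIdeal (hF : F.ResolvesQuotient (monomialIdeal R s))
    {a : F.ι 0 →₀ MvPolynomial σ R} :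
    a ∈ F.boundaries Z 0 ↔ a default ∈ monomialIdeal R (s ∪ (Finsupp.single · 1) '' Z) := by
  rw [hF.mem_boundaries_zero_iff, varIdeal_eq_monomialIdeal, monomialIdeal_union]

lemma isRegularVars (hF : F.ResolvesQuotient (monomialIdeal R s)) :
    F.IsRegularVars {z | ∀ g ∈ s, g z = 0} := by
  intro Z _ z ⟨hzs, hzZ⟩ a
  rw [hF.mem_boundaries_zero_iff_of_monomialIdeal, hF.mem_boundaries_zero_iff_of_monomialIdeal,
    Finsupp.smul_apply, smul_eq_mul, X_mul_mem_monomialIdeal_iff]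
  · exact id
  · rintro _ (hg | ⟨i, hi, rfl⟩)
    · exact hzs _ hg
    · exact Finsupp.single_eq_of_ne fun h => hzZ (h ▸ hi)

lemma torVanishes_zero (hF : F.ResolvesQuotient (monomialIdeal R s)) {e : ℤ}
    (he : ∀ m : σ →₀ ℕ, (m.degree : ℤ) = e → m ∈ upperClosure s ∨ ∃ i ∈ Y, m i ≠ 0) :
    F.TorVanishes Y 0 e := by
  intro a _ ha
  rw [hF.mem_boundaries_zero_iff_of_monomialIdeal, mem_monomialIdeal_iff]
  intro m hm
  have hdeg := isWeightedHomogeneous_int_iff.mp (ha default) m hm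
  rw [hF.deg_default, sub_zero] at hdeg
  rw [upperClosure_union, UpperSet.mem_inf_iff]
  refine (he m hdeg).imp_right ?_
  rintro ⟨i, hi, hmi⟩
  exact ⟨_, ⟨i, hi, rfl⟩, by simpa [Nat.one_le_iff_ne_zero] using hmi⟩

theorem deg_le [Nontrivial R] [Finite σ] (hF : F.ResolvesQuotient (monomialIdeal R s)) {r : ℕ}
    (hs : ∀ m ∉ upperClosure s, (∀ z, (∀ g ∈ s, g z = 0) → m z = 0) → m.degree ≤ r)
    (b : F.ι i) : F.deg i b ≤ r + i := by
  refine deg_le_of_isRegularVars hF.isRegularVars (fun e he => hF.torVanishes_zero ?_) b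
  rintro m rfl
  contrapose! he
  exact_mod_cast hs m he.1 he.2

lemma deg_nonneg [Nontrivial R] (hF : F.ResolvesQuotient I) (i : ℕ) (b : F.ι i) :
    0 ≤ F.deg i b := by
  have := le_deg_of_forall_le (F := F) (m := 0) i.zero_le
    (fun c => by rw [Unique.eq_default c, hF.deg_default, Nat.cast_zero, add_zero]) b
  omega

lemma exists_mem_upperClosure_degree_eq [Nontrivial R]
    (hF : F.ResolvesQuotient (monomialIdeal R s)) (b : F.ι 1) :
    ∃ m ∈ upperClosure s, (m.degree : ℤ) = F.deg 1 b := by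
  set a := F.d 0 (Finsupp.single b 1)
  have hne : a default ≠ 0 := fun h => d_single_ne_zero b <| Finsupp.ext fun c => by
    rw [Unique.eq_default c]
    exact h
  obtain ⟨m, hm⟩ := support_nonempty.mpr hne
  have hdeg := isWeightedHomogeneous_int_iff.mp (F.d_mem 0 b default) m hm
  rw [hF.deg_default, sub_zero] at hdeg
  have hmem : a default ∈ monomialIdeal R s := (hF.mem_range_iff a).mp ⟨_, rfl⟩
  exact ⟨m, mem_monomialIdeal_iff.mp hmem m hm, hdeg⟩

end ResolvesQuotient

end MonomialQuotients

end MinimalFreeResolution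

section ExponentSeries

variable {σ : Type*}

/-- The Hilbert series, with integer coefficients, of the span of the monomials with exponents
in `s`. -/
def exponentSeries (s : Set (σ →₀ ℕ)) : PowerSeries ℤ :=
  PowerSeries.mk fun n => {a ∈ s | a.degree = n}.ncard

lemma exponentSeries_singleton (a : σ →₀ ℕ) :
    exponentSeries {a} = PowerSeries.X ^ a.degree := by
  ext n
  rw [exponentSeries, PowerSeries.coeff_mk, PowerSeries.coeff_X_pow]
  split_ifs with h
  · rw [Set.sep_eq_self_iff_mem_true.mpr (by simp [h]), Set.ncard_singleton, Nat.cast_one]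
  · rw [Set.sep_eq_empty_iff_mem_false.mpr (by simp [Ne.symm h]), Set.ncard_empty, Nat.cast_zero]

lemma exponentSeries_union [Finite σ] {s t : Set (σ →₀ ℕ)} (hst : Disjoint s t) :
    exponentSeries (s ∪ t) = exponentSeries s + exponentSeries t := by
  ext n
  have hfin (u : Set (σ →₀ ℕ)) : {a ∈ u | a.degree = n}.Finite :=
    (Finsupp.finite_of_degree_eq n).subset fun _ ha => ha.2
  simp only [exponentSeries, map_add, PowerSeries.coeff_mk]
  rw [← Nat.cast_add, ← Set.ncard_union_eq (hst.mono (Set.sep_subset _ _) (Set.sep_subset _ _))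
    (hfin s) (hfin t), ← Set.sep_union]
  rfl

lemma exponentSeries_image_add_single (s : Set (σ →₀ ℕ)) (z : σ) :
    exponentSeries ((· + Finsupp.single z 1) '' s) = PowerSeries.X * exponentSeries s := by
  have hsep (n : ℕ) : {a ∈ (· + Finsupp.single z 1) '' s | a.degree = n} =
      (· + Finsupp.single z 1) '' {a ∈ s | a.degree + 1 = n} := by
    ext a
    constructor
    · rintro ⟨⟨a, ha, rfl⟩, rfl⟩
      exact ⟨a, ⟨ha, by simp⟩, rfl⟩
    · rintro ⟨a, ⟨ha, rfl⟩, rfl⟩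
      exact ⟨⟨a, ha, rfl⟩, by simp⟩
  ext n
  rw [exponentSeries, PowerSeries.coeff_mk, hsep,
    Set.ncard_image_of_injective _ (add_left_injective _)]
  cases n with
  | zero => simp
  | succ n => simp [PowerSeries.coeff_succ_X_mul, exponentSeries]

lemma exponentSeries_mul_one_sub_X [Finite σ] {s : Set (σ →₀ ℕ)} {z : σ}
    (hs : ∀ a, a + Finsupp.single z 1 ∈ s ↔ a ∈ s) :
    exponentSeries s * (1 - PowerSeries.X) = exponentSeries {a ∈ s | a z = 0} := by
  have hdisj : Disjoint {a ∈ s | a z = 0} ((· + Finsupp.single z 1) '' s) := by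
    rw [Set.disjoint_left]
    rintro _ ⟨-, hz⟩ ⟨a, -, rfl⟩
    simp at hz
  have hunion : {a ∈ s | a z = 0} ∪ (· + Finsupp.single z 1) '' s = s := by
    refine subset_antisymm ?_ fun a ha => ?_
    · rintro _ (⟨ha, -⟩ | ⟨a, ha, rfl⟩)
      exacts [ha, (hs a).mpr ha]
    · by_cases hz : a z = 0
      · exact .inl ⟨ha, hz⟩
      · have hle : Finsupp.single z 1 ≤ a :=
          Finsupp.single_le_iff.mpr (Nat.one_le_iff_ne_zero.mpr hz)
        obtain ⟨c, rfl⟩ := exists_add_of_le hle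
        rw [add_comm] at ha ⊢
        exact .inr ⟨c, (hs c).mp ha, rfl⟩
  have hsum := exponentSeries_union hdisj
  rw [hunion, exponentSeries_image_add_single] at hsum
  linear_combination hsum

lemma exponentSeries_mul_one_sub_X_pow [Finite σ] {s : Set (σ →₀ ℕ)} {T : Finset σ}
    (hs : ∀ z ∈ T, ∀ a, a + Finsupp.single z 1 ∈ s ↔ a ∈ s) :
    exponentSeries s * (1 - PowerSeries.X) ^ T.card =
      exponentSeries {a ∈ s | ∀ z ∈ T, a z = 0} := by
  classical
  induction T using Finset.induction_on with
  | empty => simp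
  | insert z T hz ih =>
    rw [Finset.card_insert_of_notMem hz, pow_succ, ← mul_assoc,
      ih fun y hy => hs y (Finset.mem_insert_of_mem hy), exponentSeries_mul_one_sub_X]
    · congr 1
      ext a
      simp only [Set.mem_ofPred_eq, Finset.forall_mem_insert]
      tauto
    · intro a
      have hne : ∀ y ∈ T, Finsupp.single z 1 y = 0 := fun y hy =>
        Finsupp.single_eq_of_ne (ne_of_mem_of_not_mem hy hz)
      simp +contextual [hs z (Finset.mem_insert_self z T), hne]

lemma exponentSeries_support_subset_mul [Finite σ] (P : Finset σ) :
    exponentSeries {a : σ →₀ ℕ | a.support ⊆ P} * (1 - PowerSeries.X) ^ P.card = 1 := by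
  have hzero : {a ∈ {a : σ →₀ ℕ | a.support ⊆ P} | ∀ z ∈ P, a z = 0} = {0} := by
    ext a
    simp only [Set.mem_ofPred_eq, Set.mem_singleton_iff]
    refine ⟨fun ⟨hsupp, hz⟩ => Finsupp.support_eq_empty.mp ?_, by rintro rfl; simp⟩
    exact Finset.eq_empty_of_forall_notMem fun z h =>
      Finsupp.mem_support_iff.mp h (hz z (hsupp h))
  rw [exponentSeries_mul_one_sub_X_pow, hzero, exponentSeries_singleton, map_zero, pow_zero]
  intro z hz a
  simp only [Set.mem_ofPred_eq, Finset.subset_iff, Finsupp.mem_support_iff, Finsupp.add_apply]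
  refine forall_congr' fun y => ?_
  obtain rfl | hy := eq_or_ne y z
  · simp [hz]
  · simp [Finsupp.single_eq_of_ne hy]

lemma exponentSeries_univ_mul [Finite σ] :
    exponentSeries (Set.univ : Set (σ →₀ ℕ)) * (1 - PowerSeries.X) ^ Nat.card σ = 1 := by
  have := Fintype.ofFinite σ
  simpa using exponentSeries_support_subset_mul (Finset.univ : Finset σ)

lemma exponentSeries_support_subset_degree_le (P : Finset σ) (r : ℕ) :
    exponentSeries {a : σ →₀ ℕ | a.support ⊆ P ∧ a.degree ≤ r} =
      PowerSeries.mk fun n => if n ≤ r then (P.card.multichoose n : ℤ) else 0 := by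
  classical
  ext n
  rw [exponentSeries, PowerSeries.coeff_mk, PowerSeries.coeff_mk]
  split_ifs with h
  · have hset : {a ∈ {a : σ →₀ ℕ | a.support ⊆ P ∧ a.degree ≤ r} | a.degree = n} =
        ↑(P.finsuppAntidiag n) := by
      ext a
      simp only [Set.mem_ofPred_eq, Finset.mem_coe, Finset.mem_finsuppAntidiag]
      constructor
      · rintro ⟨⟨hP, -⟩, rfl⟩
        exact ⟨(degree_eq_sum_of_support_subset hP).symm, hP⟩
      · rintro ⟨rfl, hP⟩
        have := degree_eq_sum_of_support_subset hP
        exact ⟨⟨hP, this.trans_le h⟩, this⟩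
    rw [hset, Set.ncard_coe_finset, Finset.card_finsuppAntidiag_nat_eq_multichoose]
  · rw [Set.sep_eq_empty_iff_mem_false.mpr (by grind), Set.ncard_empty, Nat.cast_zero]

end ExponentSeries

section HilbertFunctions

open MvPolynomial

variable {σ ι k : Type*} [Field k]

lemma finrank_restrictSupport (s : Set (σ →₀ ℕ)) :
    Module.finrank k (restrictSupport k s) = s.ncard :=
  Module.finrank_eq_nat_card_basis (basisRestrictSupport k s)

lemma weightedHomogeneousSubmodule_int_eq_restrictSupport (d : ℤ) :
    weightedHomogeneousSubmodule k (1 : σ → ℤ) d = restrictSupport k {a | (a.degree : ℤ) = d} := by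
  ext p
  rw [mem_weightedHomogeneousSubmodule, isWeightedHomogeneous_int_iff, mem_restrictSupport_iff]
  rfl

instance finite_weightedHomogeneousSubmodule_int [Finite σ] (d : ℤ) :
    Module.Finite k (weightedHomogeneousSubmodule k (1 : σ → ℤ) d) := by
  have : Finite {a : σ →₀ ℕ | (a.degree : ℤ) = d} :=
    (Finsupp.finite_of_degree_eq d.toNat).subset fun a ha => by
      simp only [Set.mem_ofPred_eq] at ha ⊢
      omega
  rw [weightedHomogeneousSubmodule_int_eq_restrictSupport]
  exact .of_basis (basisRestrictSupport k _)

variable (k) in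
lemma coeff_X_pow_mul_exponentSeries_univ {d : ℤ} (hd : 0 ≤ d) (n : ℕ) :
    PowerSeries.coeff n
        (PowerSeries.X ^ d.toNat * exponentSeries (Set.univ : Set (σ →₀ ℕ)) : PowerSeries ℤ) =
      Module.finrank k (weightedHomogeneousSubmodule k (1 : σ → ℤ) (n - d)) := by
  rw [weightedHomogeneousSubmodule_int_eq_restrictSupport, finrank_restrictSupport,
    PowerSeries.coeff_X_pow_mul', exponentSeries, PowerSeries.coeff_mk]
  split_ifs with h
  · congr 2
    ext a
    simp only [Set.mem_ofPred_eq, Set.mem_univ, true_and]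
    omega
  · rw [eq_comm, Nat.cast_eq_zero]
    convert Set.ncard_empty (σ →₀ ℕ)
    ext a
    simp only [Set.mem_ofPred_eq, Set.mem_empty_iff_false, iff_false]
    omega

lemma gradedPiece_eq_bot {deg : ι → ℤ} {d : ℤ} (hdeg : ∀ b, d < deg b) :
    gradedPiece (R := k) (σ := σ) deg d = ⊥ := by
  refine (Submodule.eq_bot_iff _).mpr fun x hx => Finsupp.ext fun b => ?_
  by_contra hne
  obtain ⟨a, ha⟩ := support_nonempty.mpr hne
  have := isWeightedHomogeneous_int_iff.mp (hx b) a ha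
  have := hdeg b
  omega

/-- An element of a graded free module of finite rank is homogeneous iff its coordinates are. -/
def gradedPieceEquiv [Finite ι] (deg : ι → ℤ) (d : ℤ) :
    gradedPiece (R := k) (σ := σ) deg d ≃ₗ[k]
      ∀ b, weightedHomogeneousSubmodule k (1 : σ → ℤ) (d - deg b) where
  toFun x b := ⟨x.1 b, x.2 b⟩
  invFun f := ⟨Finsupp.equivFunOnFinite.symm fun b => (f b).1, fun b => (f b).2⟩
  map_add' _ _ := rfl
  map_smul' _ _ := rfl
  left_inv _ := Subtype.ext (Finsupp.ext fun _ => rfl)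
  right_inv _ := rfl

instance finite_gradedPiece [Finite ι] [Finite σ] (deg : ι → ℤ) (d : ℤ) :
    Module.Finite k (gradedPiece (R := k) (σ := σ) deg d) :=
  .equiv (gradedPieceEquiv deg d).symm

lemma mk_ncard_eq_sum_X_pow [Fintype ι] {deg : ι → ℤ} (hdeg : ∀ b, 0 ≤ deg b) :
    PowerSeries.mk (fun n => ({b | deg b = n}.ncard : ℤ)) =
      ∑ b, PowerSeries.X ^ (deg b).toNat := by
  classical
  ext n
  have hset : {b | deg b = n} = ↑{b : ι | n = (deg b).toNat} := by
    ext b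
    have := hdeg b
    simp only [Set.mem_ofPred_eq]
    omega
  rw [PowerSeries.coeff_mk, hset, Set.ncard_eq_toFinset_card']
  simp [PowerSeries.coeff_X_pow]

lemma mk_finrank_gradedPiece [Finite σ] [Finite ι] {deg : ι → ℤ} (hdeg : ∀ b, 0 ≤ deg b) :
    PowerSeries.mk (fun n => (Module.finrank k (gradedPiece (R := k) (σ := σ) deg n) : ℤ)) =
      PowerSeries.mk (fun n => ({b | deg b = n}.ncard : ℤ)) *
        exponentSeries (Set.univ : Set (σ →₀ ℕ)) := by
  have := Fintype.ofFinite ι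
  ext n
  rw [mk_ncard_eq_sum_X_pow hdeg, Finset.sum_mul, map_sum, PowerSeries.coeff_mk,
    (gradedPieceEquiv deg n).finrank_eq, Module.finrank_pi_fintype, Nat.cast_sum]
  exact Finset.sum_congr rfl fun b _ => (coeff_X_pow_mul_exponentSeries_univ k (hdeg b) n).symm

end HilbertFunctions

namespace MinimalFreeResolution

section EulerCharacteristic

open MvPolynomial

variable {σ k : Type*} [Field k] (F : MinimalFreeResolution σ k) {i : ℕ}

/-- The graded Betti number of `F` in homological degree `i` and internal degree `d`. -/
def betti (i : ℕ) (d : ℤ) : ℕ :=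
  {b : F.ι i | F.deg i b = d}.ncard

variable {F} in
lemma betti_eq_zero {d : ℤ} (h : ∀ b, F.deg i b ≠ d) : F.betti i d = 0 := by
  rw [betti, show {b | F.deg i b = d} = ∅ from Set.eq_empty_of_forall_notMem h, Set.ncard_empty]

/-- The part of degree `n` of the differential `d i`. -/
def gradedD (i : ℕ) (n : ℤ) :
    gradedPiece (R := k) (σ := σ) (F.deg (i + 1)) n →ₗ[k]
      gradedPiece (R := k) (σ := σ) (F.deg i) n :=
  ((F.d i).restrictScalars k).restrict fun _ hx => map_mem_gradedPiece (F.d_mem i) hx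

/-- The Hilbert series, with integer coefficients, of the image of `d i`. -/
def boundarySeries (i : ℕ) : PowerSeries ℤ :=
  PowerSeries.mk fun n => Module.finrank k (LinearMap.range (F.gradedD i n))

variable {F}

lemma gradedD_exact (i : ℕ) (n : ℤ) : Function.Exact (F.gradedD (i + 1) n) (F.gradedD i n) := by
  intro x
  refine ⟨fun hx => ?_, ?_⟩
  · obtain ⟨w, hw⟩ := (F.exact i x.1).mp (congrArg Subtype.val hx)
    refine ⟨⟨gradedProj _ n w, gradedProj_mem_gradedPiece _ n w⟩, Subtype.ext ?_⟩
    change F.d (i + 1) (gradedProj _ n w) = x.1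
    rw [← gradedProj_map (F.d_mem (i + 1)), hw, gradedProj_eq_self x.2]
  · rintro ⟨w, rfl⟩
    exact Subtype.ext (d_comp i w.1)

lemma finrank_range_gradedD_add [Finite σ] (i : ℕ) (n : ℤ) :
    Module.finrank k (LinearMap.range (F.gradedD i n)) +
      Module.finrank k (LinearMap.range (F.gradedD (i + 1) n)) =
        Module.finrank k (gradedPiece (R := k) (σ := σ) (F.deg (i + 1)) n) := by
  have := LinearMap.finrank_range_add_finrank_ker (K := k) (V := gradedPiece (F.deg (i + 1)) n)
    (V₂ := gradedPiece (F.deg i) n) (F.gradedD i n)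
  rwa [(gradedD_exact i n).linearMap_ker_eq] at this

lemma boundarySeries_add [Finite σ] (hdeg : ∀ b, 0 ≤ F.deg (i + 1) b) :
    F.boundarySeries i + F.boundarySeries (i + 1) =
      PowerSeries.mk (fun n => (F.betti (i + 1) n : ℤ)) *
        exponentSeries (Set.univ : Set (σ →₀ ℕ)) := by
  unfold betti
  rw [← mk_finrank_gradedPiece (k := k) hdeg]
  ext n
  simp only [boundarySeries, map_add, PowerSeries.coeff_mk]
  exact_mod_cast finrank_range_gradedD_add i n

lemma X_pow_dvd_boundarySeries [Finite σ] {n : ℕ} (hdeg : ∀ b, n ≤ F.deg (i + 1) b) :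
    PowerSeries.X ^ n ∣ F.boundarySeries i := by
  refine PowerSeries.X_pow_dvd_iff.mpr fun m hm => ?_
  rw [boundarySeries, PowerSeries.coeff_mk, Nat.cast_eq_zero, ← Nat.le_zero]
  calc Module.finrank k (LinearMap.range (F.gradedD i m))
      ≤ Module.finrank k (gradedPiece (R := k) (σ := σ) (F.deg (i + 1)) m) :=
        LinearMap.finrank_range_le _
    _ = 0 := by
      rw [gradedPiece_eq_bot fun b => (Nat.cast_lt.mpr hm).trans_le (hdeg b), finrank_bot]

lemma boundarySeries_mul_add [Finite σ] (hdeg : ∀ b, 0 ≤ F.deg (i + 1) b) :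
    F.boundarySeries i * (1 - PowerSeries.X) ^ Nat.card σ +
      F.boundarySeries (i + 1) * (1 - PowerSeries.X) ^ Nat.card σ =
        PowerSeries.mk (fun n => (F.betti (i + 1) n : ℤ)) := by
  rw [← add_mul, boundarySeries_add hdeg, mul_assoc, exponentSeries_univ_mul, mul_one]

-- The numerator of the Hilbert series is the alternating sum of the generating functions of the
-- Betti numbers; the assumptions on degrees leave a single summand in degree `n`.
theorem cast_betti_eq [Finite σ] (hdeg : ∀ i b, 0 ≤ F.deg i b) {n : ℕ}
    (hne : ∀ j < i, ∀ b, F.deg (j + 1) b ≠ n) (hlt : ∀ b, n < F.deg (i + 2) b) :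
    (F.betti (i + 1) n : ℤ) = (-1) ^ i *
      PowerSeries.coeff n (F.boundarySeries 0 * (1 - PowerSeries.X) ^ Nat.card σ) := by
  have hcoeff (j : ℕ) := congrArg (PowerSeries.coeff n) <|
    boundarySeries_mul_add (F := F) fun b => hdeg (j + 1) b
  simp only [map_add, PowerSeries.coeff_mk] at hcoeff
  have hsign : ∀ j ≤ i,
      PowerSeries.coeff n (F.boundarySeries j * (1 - PowerSeries.X) ^ Nat.card σ) =
        (-1) ^ j *
          PowerSeries.coeff n (F.boundarySeries 0 * (1 - PowerSeries.X) ^ Nat.card σ) := by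
    intro j hj
    induction j with
    | zero => rw [pow_zero, one_mul]
    | succ j ih =>
      have hzero : F.betti (j + 1) n = 0 := betti_eq_zero (hne j hj)
      rw [pow_succ', mul_assoc, ← ih (by omega)]
      have := hcoeff j
      rw [hzero] at this
      linear_combination this
  have hdvd : PowerSeries.X ^ (n + 1) ∣ F.boundarySeries (i + 1) :=
    X_pow_dvd_boundarySeries fun b => Int.add_one_le_of_lt (hlt b)
  have hvanish :
      PowerSeries.coeff n (F.boundarySeries (i + 1) * (1 - PowerSeries.X) ^ Nat.card σ) = 0 :=
    PowerSeries.X_pow_dvd_iff.mp (dvd_mul_of_dvd_left hdvd _) n n.lt_succ_self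
  rw [← hsign i le_rfl, ← hcoeff i, hvanish, add_zero]

variable [Unique (F.ι 0)] {s : Set (σ →₀ ℕ)}

namespace ResolvesQuotient

lemma exists_gradedD_zero_apply_eq_iff (hF : F.ResolvesQuotient (monomialIdeal k s)) {n : ℕ}
    {p : MvPolynomial σ k} :
    (∃ x, (F.gradedD 0 n x).1 default = p) ↔
      p ∈ restrictSupport k {a ∈ (upperClosure s : Set (σ →₀ ℕ)) | a.degree = n} := by
  rw [mem_restrictSupport_iff]
  constructor
  · rintro ⟨x, rfl⟩ a ha
    have hdeg := isWeightedHomogeneous_int_iff.mp ((F.gradedD 0 n x).2 default) a ha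
    rw [hF.deg_default, sub_zero, Nat.cast_inj] at hdeg
    have hmem : (F.gradedD 0 n x).1 default ∈ monomialIdeal k s :=
      (hF.mem_range_iff _).mp ⟨x.1, rfl⟩
    exact ⟨mem_monomialIdeal_iff.mp hmem a ha, hdeg⟩
  · intro hp
    have hpI : Finsupp.single default p ∈ LinearMap.range (F.d 0) := by
      rw [hF.mem_range_iff, Finsupp.single_eq_same, mem_monomialIdeal_iff]
      exact fun a ha => (hp ha).1
    obtain ⟨w, hw⟩ := hpI
    refine ⟨⟨gradedProj _ n w, gradedProj_mem_gradedPiece _ n w⟩, ?_⟩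
    change F.d 0 (gradedProj _ n w) default = p
    rw [← gradedProj_map (F.d_mem 0), hw, gradedProj_apply, Finsupp.single_eq_same, hF.deg_default,
      sub_zero]
    exact (isWeightedHomogeneous_int_iff.mpr fun a ha => by
      exact_mod_cast (hp ha).2).weightedHomogeneousComponent_same

lemma boundarySeries_zero (hF : F.ResolvesQuotient (monomialIdeal k s)) :
    F.boundarySeries 0 = exponentSeries (upperClosure s : Set (σ →₀ ℕ)) := by
  ext n
  rw [boundarySeries, exponentSeries, PowerSeries.coeff_mk, PowerSeries.coeff_mk, Nat.cast_inj,
    ← finrank_restrictSupport (k := k)]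
  let φ : gradedPiece (R := k) (σ := σ) (F.deg 0) n →ₗ[k] MvPolynomial σ k :=
    Finsupp.lapply default ∘ₗ (gradedPiece (F.deg 0) n).subtype
  have hφ : Function.Injective φ := fun x y h => Subtype.ext <| Finsupp.ext fun b => by
    rw [Unique.eq_default b]
    exact h
  have hmap : (LinearMap.range (F.gradedD 0 n)).map φ =
      restrictSupport k {a ∈ (upperClosure s : Set (σ →₀ ℕ)) | a.degree = n} := by
    rw [← LinearMap.range_comp]
    exact Submodule.ext fun p => hF.exists_gradedD_zero_apply_eq_iff
  rw [← hmap]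
  exact (Submodule.equivMapOfInjective φ hφ _).finrank_eq

end ResolvesQuotient

end EulerCharacteristic

end MinimalFreeResolution

section Numerator

open PowerSeries

lemma coeff_one_sub_X_pow (e m : ℕ) :
    coeff m ((1 - X : ℤ⟦X⟧) ^ e) = (-1) ^ m * (e.choose m : ℤ) := by
  have hrescale : (1 - X : ℤ⟦X⟧) ^ e =
      rescale (-1) (((1 + Polynomial.X) ^ e : Polynomial ℤ) : ℤ⟦X⟧) := by
    simp [sub_eq_add_neg]
  rw [hrescale, coeff_rescale, Polynomial.coeff_coe, Polynomial.coeff_one_add_X_pow]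

lemma one_sub_one_sub_X_pow (e : ℕ) :
    1 - (1 - X : ℤ⟦X⟧) ^ e = X * mk fun m => (-1) ^ m * (e.choose (m + 1) : ℤ) := by
  ext m
  rw [map_sub, coeff_one_sub_X_pow]
  cases m with
  | zero => simp
  | succ m => simp [coeff_succ_X_mul, coeff_one, pow_succ]

lemma choose_mul_choose_add_choose_mul_choose (e r m : ℕ) :
    (e + r).choose (m + r + 2) * (m + r + 1).choose r +
        (e + r + 1).choose (m + r + 2) * (m + r + 1).choose (r + 1) =
      e.choose (m + 1) * (e + r).choose (r + 1) := by
  have h₁ : (e + r + 1).choose (m + r + 2) * (m + r + 2).choose (r + 1) =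
      (e + r + 1).choose (r + 1) * e.choose (m + 1) := by
    rw [Nat.choose_mul (by omega)]
    congr 2 <;> omega
  have h₂ : (e + r).choose (m + r + 1) * (m + r + 1).choose r =
      (e + r).choose r * e.choose (m + 1) := by
    rw [Nat.choose_mul (by omega)]
    congr 2 <;> omega
  have hpascal₁ := Nat.choose_succ_succ' (e + r) (m + r + 1)
  have hpascal₂ := Nat.choose_succ_succ' (m + r + 1) r
  have hpascal₃ := Nat.choose_succ_succ' (e + r) r
  rw [hpascal₂, hpascal₃] at h₁
  rw [hpascal₁] at h₁ ⊢
  linarith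

lemma mk_ite_le_succ (f : ℕ → ℤ) (r : ℕ) :
    mk (fun n => if n ≤ r + 1 then f n else 0) =
      mk (fun n => if n ≤ r then f n else 0) + X ^ (r + 1) * C (f (r + 1)) := by
  ext n
  simp only [coeff_mk, map_add, coeff_X_pow_mul', coeff_C]
  grind

theorem one_sub_one_sub_X_pow_mul_mk_multichoose (e r : ℕ) :
    1 - (1 - X : ℤ⟦X⟧) ^ e * mk (fun n => if n ≤ r then (e.multichoose n : ℤ) else 0) =
      X ^ (r + 1) * mk fun m =>
        (-1) ^ m * ((e + r).choose (m + r + 1) * (m + r).choose r : ℤ) := by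
  induction r with
  | zero =>
    have htrunc : mk (fun n => if n ≤ 0 then (e.multichoose n : ℤ) else 0) = 1 := by
      ext n
      cases n <;> simp
    rw [htrunc, mul_one, one_sub_one_sub_X_pow]
    simp
  | succ r ih =>
    have hmulti : e.multichoose (r + 1) = (e + r).choose (r + 1) := Nat.multichoose_eq e (r + 1)
    rw [mk_ite_le_succ fun n => (e.multichoose n : ℤ), mul_add, ← sub_sub, ih, mul_left_comm,
      ← mul_sub, pow_succ X (r + 1), mul_assoc, hmulti]
    congr 1
    ext m
    rw [map_sub, coeff_mul_C, coeff_one_sub_X_pow, coeff_mk]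
    cases m with
    | zero => simp
    | succ m =>
      have hchoose := congrArg (Nat.cast (R := ℤ)) (choose_mul_choose_add_choose_mul_choose e r m)
      push_cast at hchoose
      rw [coeff_succ_X_mul, coeff_mk, show m + 1 + r = m + r + 1 by ring,
        show m + (r + 1) = m + r + 1 by ring, pow_succ]
      linear_combination (-(-1) ^ m) * hchoose

end Numerator

section MonomialAddPow

open MvPolynomial

variable {σ : Type*}

/-- The exponents of the generators of `(u) + J ^ (deg u + 1)`, where `u` stands for a monomial and
`J` is generated by the variables in `P`. -/
def monomialAddPowExponents (P : Finset σ) (u : σ →₀ ℕ) : Set (σ →₀ ℕ) :=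
  {u} ∪ {a | a.degree = u.degree + 1 ∧ ↑a.support ⊆ (P : Set σ)}

lemma span_monomial_sup_varIdeal_pow {R : Type*} [CommSemiring R] (P : Finset σ) (u : σ →₀ ℕ) :
    Ideal.span {monomial u 1} ⊔ varIdeal R (P : Set σ) ^ (u.degree + 1) =
      monomialIdeal R (monomialAddPowExponents P u) := by
  rw [varIdeal_pow_eq_monomialIdeal, monomialAddPowExponents, monomialIdeal_union,
    monomialIdeal, monomialIdeal, Set.image_singleton]

variable {P : Finset σ} {u : σ →₀ ℕ}

lemma mem_upperClosure_monomialAddPowExponents_iff {a : σ →₀ ℕ} :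
    a ∈ upperClosure (monomialAddPowExponents P u) ↔ u ≤ a ∨ u.degree + 1 ≤ ∑ i ∈ P, a i := by
  rw [monomialAddPowExponents, upperClosure_union, UpperSet.mem_inf_iff,
    mem_upperClosure_degree_eq_support_subset_iff]
  simp

lemma degree_le_of_notMem_upperClosure_monomialAddPowExponents (hu : u.support ⊆ P) {m : σ →₀ ℕ}
    (hm : m ∉ upperClosure (monomialAddPowExponents P u))
    (hzero : ∀ z, (∀ g ∈ monomialAddPowExponents P u, g z = 0) → m z = 0) :
    m.degree ≤ u.degree := by
  have hmP : m.support ⊆ P := by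
    intro z hz
    by_contra hzP
    refine Finsupp.mem_support_iff.mp hz (hzero z ?_)
    rintro g (rfl | ⟨-, hg⟩)
    · exact Finsupp.notMem_support_iff.mp fun h => hzP (hu h)
    · exact Finsupp.notMem_support_iff.mp fun h => hzP (hg h)
  rw [mem_upperClosure_monomialAddPowExponents_iff, not_or,
    ← degree_eq_sum_of_support_subset hmP] at hm
  omega

lemma degree_le_of_mem_upperClosure_monomialAddPowExponents {m : σ →₀ ℕ}
    (hm : m ∈ upperClosure (monomialAddPowExponents P u)) : u.degree ≤ m.degree := by
  obtain ⟨g, rfl | ⟨hg, -⟩, hgm⟩ := hm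
  · exact Finsupp.degree_mono hgm
  · have := Finsupp.degree_mono hgm
    omega

lemma constantCoeff_eq_zero_of_mem_monomialAddPow {R : Type*} [CommSemiring R] (hu : u ≠ 0) :
    ∀ f ∈ monomialIdeal R (monomialAddPowExponents P u), constantCoeff f = 0 := by
  intro f hf
  by_contra h
  have := degree_le_of_mem_upperClosure_monomialAddPowExponents
    (mem_monomialIdeal_iff.mp hf 0 (mem_support_iff.mpr h))
  rw [map_zero, nonpos_iff_eq_zero, Finsupp.degree_eq_zero_iff] at this
  exact hu this

lemma add_single_mem_upperClosure_monomialAddPowExponents_iff (hu : u.support ⊆ P) {z : σ}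
    (hz : z ∉ P) {a : σ →₀ ℕ} :
    a + Finsupp.single z 1 ∈ upperClosure (monomialAddPowExponents P u) ↔
      a ∈ upperClosure (monomialAddPowExponents P u) := by
  have hne : ∀ i ≠ z, (a + Finsupp.single z 1 : σ →₀ ℕ) i = a i := fun i hi => by
    simp [Finsupp.single_eq_of_ne hi]
  have huz : u z = 0 := Finsupp.notMem_support_iff.mp fun h => hz (hu h)
  have hle : u ≤ a + Finsupp.single z 1 ↔ u ≤ a := by
    refine forall_congr' fun i => ?_
    obtain rfl | hi := eq_or_ne i z
    · simp [huz]
    · rw [hne i hi]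
  rw [mem_upperClosure_monomialAddPowExponents_iff, mem_upperClosure_monomialAddPowExponents_iff,
    hle, Finset.sum_congr rfl fun i hi => hne i (ne_of_mem_of_not_mem hi hz)]

lemma exponentSeries_upperClosure_support_subset [Finite σ] (hu : u.support ⊆ P) :
    exponentSeries {a ∈ (upperClosure (monomialAddPowExponents P u) : Set (σ →₀ ℕ)) |
        a.support ⊆ P} =
      exponentSeries {a : σ →₀ ℕ | a.support ⊆ P} -
        (exponentSeries {a : σ →₀ ℕ | a.support ⊆ P ∧ a.degree ≤ u.degree} -
          PowerSeries.X ^ u.degree) := by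
  let A : Set (σ →₀ ℕ) := {a | a.support ⊆ P ∧ a.degree ≤ u.degree}
  let B : Set (σ →₀ ℕ) :=
    {a ∈ (upperClosure (monomialAddPowExponents P u) : Set (σ →₀ ℕ)) | a.support ⊆ P}
  have hA : exponentSeries A = PowerSeries.X ^ u.degree + exponentSeries (A \ {u}) := by
    have huA : u ∈ A := ⟨hu, le_rfl⟩
    rw [← exponentSeries_singleton, ← exponentSeries_union Set.disjoint_sdiff_right,
      Set.union_sdiff_cancel (Set.singleton_subset_iff.mpr huA)]
  have hmem {a : σ →₀ ℕ} : a ∈ B ↔ a.support ⊆ P ∧ a ∉ A \ {u} := by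
    simp only [B, A, Set.mem_ofPred_eq, SetLike.mem_coe, Set.mem_sdiff, Set.mem_singleton_iff,
      mem_upperClosure_monomialAddPowExponents_iff, and_comm, and_congr_right_iff]
    intro ha
    rw [← degree_eq_sum_of_support_subset ha]
    have hlt : u ≤ a → a ≠ u → u.degree < a.degree := by
      intro hle hne
      obtain ⟨c, rfl⟩ := exists_add_of_le hle
      have hc : c.degree ≠ 0 := mt (Finsupp.degree_eq_zero_iff c).mp (by simpa using hne)
      rw [map_add]
      omega
    grind
  have hdisj : Disjoint B (A \ {u}) := Set.disjoint_left.mpr fun a ha => (hmem.mp ha).2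
  have hunion : B ∪ A \ {u} = {a | a.support ⊆ P} := by
    ext a
    rw [Set.mem_union, hmem]
    grind
  rw [← hunion, exponentSeries_union hdisj, hA]
  ring

theorem exponentSeries_upperClosure_monomialAddPowExponents_mul [Finite σ] (hu : u.support ⊆ P) :
    exponentSeries (upperClosure (monomialAddPowExponents P u) : Set (σ →₀ ℕ)) *
        (1 - PowerSeries.X) ^ Nat.card σ =
      PowerSeries.X ^ u.degree + PowerSeries.X ^ (u.degree + 1) * PowerSeries.mk fun m =>
        (-1) ^ m * ((P.card + u.degree).choose (m + u.degree + 1) * (m + u.degree).choose u.degree -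
          P.card.choose (m + 1) : ℤ) := by
  classical
  have := Fintype.ofFinite σ
  have hshift : ∀ z ∈ Pᶜ, ∀ a, a + Finsupp.single z 1 ∈
      (upperClosure (monomialAddPowExponents P u) : Set (σ →₀ ℕ)) ↔
        a ∈ (upperClosure (monomialAddPowExponents P u) : Set (σ →₀ ℕ)) := fun z hz _ =>
    add_single_mem_upperClosure_monomialAddPowExponents_iff hu (Finset.mem_compl.mp hz)
  have hsupp : {a ∈ (upperClosure (monomialAddPowExponents P u) : Set (σ →₀ ℕ)) |
      ∀ z ∈ Pᶜ, a z = 0} = {a ∈ (upperClosure (monomialAddPowExponents P u) : Set (σ →₀ ℕ)) |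
        a.support ⊆ P} := by
    ext a
    simp only [Set.mem_ofPred_eq, Finset.mem_compl, Finset.subset_iff, Finsupp.mem_support_iff]
    grind
  have hP := exponentSeries_support_subset_mul P
  have hA := one_sub_one_sub_X_pow_mul_mk_multichoose P.card u.degree
  have hpow := one_sub_one_sub_X_pow P.card
  have hmk : PowerSeries.mk (fun m => (-1) ^ m *
        ((P.card + u.degree).choose (m + u.degree + 1) * (m + u.degree).choose u.degree -
          P.card.choose (m + 1) : ℤ)) =
      PowerSeries.mk (fun m => (-1) ^ m * ((P.card + u.degree).choose (m + u.degree + 1) *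
        (m + u.degree).choose u.degree : ℤ)) -
      PowerSeries.mk (fun m => (-1) ^ m * (P.card.choose (m + 1) : ℤ)) := by
    ext m
    simp [mul_sub]
  rw [Nat.card_eq_fintype_card, ← P.card_compl_add_card, pow_add, ← mul_assoc,
    exponentSeries_mul_one_sub_X_pow hshift, hsupp, exponentSeries_upperClosure_support_subset hu,
    exponentSeries_support_subset_degree_le, hmk]
  linear_combination hP + hA - PowerSeries.X ^ u.degree * hpow

variable {k : Type*} [Field k]

namespace MinimalFreeResolution.ResolvesQuotient

variable {F : MinimalFreeResolution σ k} [Unique (F.ι 0)] {i : ℕ}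
  (hF : F.ResolvesQuotient (monomialIdeal k (monomialAddPowExponents P u)))

include hF

lemma degree_add_le_deg_succ (b : F.ι (i + 1)) : u.degree + i ≤ F.deg (i + 1) b := by
  have := le_deg_of_forall_le (F := F) (m := u.degree - 1) (Nat.le_add_left 1 i) (fun c => by
    obtain ⟨m, hm, hdeg⟩ := hF.exists_mem_upperClosure_degree_eq c
    have := degree_le_of_mem_upperClosure_monomialAddPowExponents hm
    omega) b
  push_cast at this
  linarith

variable [Finite σ] (hu : u.support ⊆ P)
include hu

lemma deg_le_degree_add (b : F.ι i) : F.deg i b ≤ u.degree + i :=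
  hF.deg_le (fun _ => degree_le_of_notMem_upperClosure_monomialAddPowExponents hu) b

lemma betti_one_degree : F.betti 1 u.degree = 1 := by
  rw [← Nat.cast_inj (R := ℤ), cast_betti_eq hF.deg_nonneg (by simp), hF.boundarySeries_zero,
    exponentSeries_upperClosure_monomialAddPowExponents_mul hu]
  · simp [PowerSeries.coeff_X_pow_mul', PowerSeries.coeff_X_pow]
  · intro b
    have := hF.degree_add_le_deg_succ b
    push_cast at this
    linarith

lemma deg_add_two (b : F.ι (i + 2)) : F.deg (i + 2) b = u.degree + (i + 2) := by
  obtain ⟨c, hc⟩ := Set.ncard_eq_one.mp (hF.betti_one_degree hu)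
  have htwo : ∀ b : F.ι 2, (u.degree : ℤ) + (2 : ℕ) ≤ F.deg 2 b := by
    intro b
    obtain ⟨c', hne, (hlt : F.deg 1 c' < F.deg 2 b)⟩ := exists_ne_deg_lt b c
    have hc' : F.deg 1 c' ≠ u.degree := fun h => hne (by
      rw [← Set.mem_singleton_iff, ← hc]
      exact h)
    have hle : (u.degree : ℤ) ≤ F.deg 1 c' := by simpa using hF.degree_add_le_deg_succ c'
    omega
  have := le_deg_of_forall_le (Nat.le_add_left 2 i) htwo b
  have := hF.deg_le_degree_add hu b
  omega

theorem cast_betti_succ (i : ℕ) :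
    (F.betti (i + 1) ((u.degree + 1 + i : ℕ) : ℤ) : ℤ) =
      (P.card + u.degree).choose (i + u.degree + 1) * (i + u.degree).choose u.degree -
        P.card.choose (i + 1) := by
  rw [cast_betti_eq hF.deg_nonneg, hF.boundarySeries_zero,
    exponentSeries_upperClosure_monomialAddPowExponents_mul hu, map_add,
    PowerSeries.coeff_X_pow, if_neg (by omega), add_comm _ i, PowerSeries.coeff_X_pow_mul, zero_add,
    PowerSeries.coeff_mk, ← mul_assoc, ← mul_pow]
  · simp
  · intro j hj b
    have := hF.deg_le_degree_add hu b
    omega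
  · intro b
    rw [hF.deg_add_two hu]
    omega

end MinimalFreeResolution.ResolvesQuotient

end MonomialAddPow

section AugmentedResolution

open MvPolynomial

variable {k : Type} [Field k] {N : ℕ} {I : Ideal (MvPolynomial (Fin N) k)}

lemma isWeightedHomogeneous_of_homogOfDeg {σ : Type} {p : MvPolynomial σ k} {d : ℤ}
    (hp : Paper.HomogOfDeg k p d) : IsWeightedHomogeneous (1 : σ → ℤ) p d := by
  rcases hp with rfl | ⟨m, rfl, hp⟩
  · exact isWeightedHomogeneous_zero k _ d
  · exact isWeightedHomogeneous_int_of_isHomogeneous hp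

lemma isWeightedHomogeneous_of_mem_idealDeg {d : ℤ} {x : I} (hx : x ∈ Paper.idealDeg k I d) :
    IsWeightedHomogeneous (1 : Fin N → ℤ) (x : MvPolynomial (Fin N) k) d := by
  unfold Paper.idealDeg at hx
  split_ifs at hx with hd
  · rw [← Int.toNat_of_nonneg hd]
    exact isWeightedHomogeneous_int_of_isHomogeneous hx
  · rw [(Submodule.mem_bot k).mp hx]
    exact isWeightedHomogeneous_zero k _ d

variable (res : Paper.MinGradedFreeRes k (Fin N) I (Paper.idealDeg k I))

/-- The bases of the modules in `augmentedResolution`. -/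
def AugmentedBasis : ℕ → Type
  | 0 => Unit
  | i + 1 => (j : ℤ) × Fin (res.β i j)

instance finite_augmentedBasis : ∀ i, Finite (AugmentedBasis res i)
  | 0 => inferInstanceAs (Finite Unit)
  | i + 1 => by
    have := (res.rowFinite i).to_subtype
    refine Finite.of_injective (β := (j : Function.support (res.β i)) × Fin (res.β i j))
      (fun b : (j : ℤ) × Fin (res.β i j) => ⟨⟨b.1, b.2.pos.ne'⟩, b.2⟩) ?_
    rintro ⟨j, s⟩ ⟨j', s'⟩ h
    obtain ⟨hj, h⟩ := Sigma.mk.inj h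
    obtain rfl : j = j' := congrArg Subtype.val hj
    exact congrArg (Sigma.mk j) (eq_of_heq h)

/-- The map to the polynomial ring, as a free module of rank one, induced by the augmentation
`res.ε` to the ideal `I`. -/
def inclusionComp : ((j : ℤ) × Fin (res.β 0 j) →₀ MvPolynomial (Fin N) k) →ₗ[MvPolynomial (Fin N) k]
    Unit →₀ MvPolynomial (Fin N) k :=
  Finsupp.lsingle () ∘ₗ I.subtype ∘ₗ res.ε

lemma inclusionComp_apply (x : (j : ℤ) × Fin (res.β 0 j) →₀ MvPolynomial (Fin N) k) :
    inclusionComp res x = Finsupp.single () (res.ε x : MvPolynomial (Fin N) k) := rfl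

lemma inclusionComp_apply_apply (x : (j : ℤ) × Fin (res.β 0 j) →₀ MvPolynomial (Fin N) k)
    (b : Unit) : inclusionComp res x b = res.ε x := Finsupp.single_eq_same

lemma inclusionComp_eq_zero_iff {x : (j : ℤ) × Fin (res.β 0 j) →₀ MvPolynomial (Fin N) k} :
    inclusionComp res x = 0 ↔ res.ε x = 0 := by
  rw [inclusionComp_apply, Finsupp.single_eq_zero, ZeroMemClass.coe_eq_zero]

/-- The minimal resolution of `S/I` obtained by splicing a minimal resolution of the proper ideal
`I` with the inclusion of `I` in the polynomial ring `S`. -/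
def augmentedResolution (hI : ∀ f ∈ I, constantCoeff f = 0) : MinimalFreeResolution (Fin N) k where
  ι := AugmentedBasis res
  finite := finite_augmentedBasis res
  deg
    | 0 => fun _ => 0
    | i + 1 => fun b => i + b.1
  d
    | 0 => inclusionComp res
    | i + 1 => res.d i
  d_mem
    | 0 => fun b _ => by
      have h : IsWeightedHomogeneous 1 (inclusionComp res (Finsupp.single b 1) ())
          (((0 : ℕ) : ℤ) + b.1 - 0) := by
        rw [inclusionComp_apply_apply, Nat.cast_zero, zero_add, sub_zero]
        exact isWeightedHomogeneous_of_mem_idealDeg (res.eps_graded b.1 b.2)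
      exact h
    | i + 1 => fun b c => by
      have h := isWeightedHomogeneous_of_homogOfDeg (res.graded i b.1 c.1 b.2 c.2)
      rwa [show b.1 + 1 - c.1 = (i + 1 : ℕ) + b.1 - (i + c.1) by push_cast; ring] at h
  minimal
    | 0 => fun b c =>
      (congrArg constantCoeff (inclusionComp_apply_apply res _ c)).trans (hI _ (res.ε _).2)
    | i + 1 => fun b c => by
      obtain h | h := eq_or_ne c.1 (b.1 + 1)
      · exact (congrArg _ (res.minimal i b.1 c.1 b.2 c.2 h)).trans (map_zero _)
      · exact constantCoeff_eq_zero_of_isWeightedHomogeneous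
          (isWeightedHomogeneous_of_homogOfDeg (res.graded i b.1 c.1 b.2 c.2))
          (sub_ne_zero.mpr h.symm)
  exact
    | 0 => fun x => (inclusionComp_eq_zero_iff res).trans (res.exact0 x)
    | i + 1 => res.exactSeq i

variable {res} {hI : ∀ f ∈ I, constantCoeff f = 0}

instance : Unique ((augmentedResolution res hI).ι 0) := inferInstanceAs (Unique Unit)

variable (res hI)

lemma resolvesQuotient_augmentedResolution : (augmentedResolution res hI).ResolvesQuotient I where
  deg_default := rfl
  mem_range_iff a := by
    constructor
    · rintro ⟨x, rfl⟩
      exact (inclusionComp_apply_apply res x ()).symm ▸ (res.ε x).2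
    · intro ha
      obtain ⟨x, hx⟩ := res.eps_surj ⟨a default, ha⟩
      refine ⟨x, Finsupp.ext fun b => (inclusionComp_apply_apply res x b).trans ?_⟩
      rw [hx]
      rfl

lemma betti_augmentedResolution (i : ℕ) (j : ℤ) :
    (augmentedResolution res hI).betti (i + 1) (i + j) = res.β i j := by
  have hset : {b : (augmentedResolution res hI).ι (i + 1) |
      (augmentedResolution res hI).deg (i + 1) b = i + j} =
      Set.range (Sigma.mk (β := fun j => Fin (res.β i j)) j) := by
    ext ⟨j', s⟩
    constructor
    · intro (h : (i : ℤ) + j' = i + j)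
      obtain rfl := add_left_cancel h
      exact ⟨s, rfl⟩
    · rintro ⟨s, h⟩
      rw [← h]
      rfl
  rw [MinimalFreeResolution.betti, hset]
  exact (Set.ncard_range_of_injective sigma_mk_injective).trans (Nat.card_fin _)

end AugmentedResolution

section BettiNumbers

variable {k : Type} [Field k] {N : ℕ} {P : Finset (Fin N)} {u : Fin N →₀ ℕ}
  (res : Paper.MinGradedFreeRes k (Fin N) (monomialIdeal k (monomialAddPowExponents P u))
    (Paper.idealDeg k (monomialIdeal k (monomialAddPowExponents P u))))
  (hu₀ : u ≠ 0) (hu : u.support ⊆ P)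
include hu₀ hu

theorem beta_zero_degree : res.β 0 u.degree = 1 := by
  have hI := constantCoeff_eq_zero_of_mem_monomialAddPow (R := k) (P := P) hu₀
  have hF := resolvesQuotient_augmentedResolution res hI
  rw [← betti_augmentedResolution res hI, Nat.cast_zero, zero_add, zero_add, hF.betti_one_degree hu]

theorem cast_beta_degree_add_one (i : ℕ) : (res.β i (u.degree + 1) : ℤ) =
    (P.card + u.degree).choose (i + u.degree + 1) * (u.degree + i).choose u.degree -
      P.card.choose (i + 1) := by
  have hI := constantCoeff_eq_zero_of_mem_monomialAddPow (R := k) (P := P) hu₀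
  have hdeg : (i : ℤ) + (u.degree + 1) = (u.degree + 1 + i : ℕ) := by
    push_cast
    ring
  rw [← betti_augmentedResolution res hI, hdeg, add_comm u.degree i]
  exact (resolvesQuotient_augmentedResolution res hI).cast_betti_succ hu i

theorem beta_eq_zero {i : ℕ} {j : ℤ} (h₀ : ¬(i = 0 ∧ j = u.degree))
    (h₁ : ¬(i < P.card ∧ j = u.degree + 1)) : res.β i j = 0 := by
  obtain rfl | hj := eq_or_ne j (u.degree + 1)
  · have hi : P.card ≤ i := by simpa using h₁
    have := cast_beta_degree_add_one res hu₀ hu i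
    rw [Nat.choose_eq_zero_of_lt (n := P.card + u.degree) (by omega),
      Nat.choose_eq_zero_of_lt (n := P.card) (by omega)] at this
    simpa using this
  · have hI := constantCoeff_eq_zero_of_mem_monomialAddPow (R := k) (P := P) hu₀
    have hF := resolvesQuotient_augmentedResolution res hI
    rw [← betti_augmentedResolution res hI]
    refine MinimalFreeResolution.betti_eq_zero fun b => ?_
    rcases i with _ | i
    · have := hF.degree_add_le_deg_succ b
      have := hF.deg_le_degree_add hu b
      omega
    · rw [hF.deg_add_two hu b]
      push_cast
      omega

end BettiNumbers

end GradedBetti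

end

/-- Lemma 4.4: for `I = (u) + J^{r+1}` with `J = (x_0,…,x_{e-1})` and `u` a monomial of
degree `r` in `x_0,…,x_{e-1}`, the graded Betti numbers of the ideal `I` are
`β_{0,r}(I) = 1`, `β_{i,r+1}(I) = C(e+r, i+r+1)·C(r+i, r) - C(e, i+1)` for
`0 ≤ i ≤ e-1`, and all others vanish. -/
theorem stmt14 (k : Type) [Field k] (n e r : ℕ) (he : 1 ≤ e) (hr : 1 ≤ r)
    (mu : Fin (n + e + 1) →₀ ℕ) (hmu : Paper.tdeg mu = r)
    (hmusupp : ∀ i : Fin (n + e + 1), e ≤ (i : ℕ) → mu i = 0)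
    (J I : Ideal (MvPolynomial (Fin (n + e + 1)) k))
    (hJdef : J = Ideal.span {p | ∃ i : Fin (n + e + 1), (i : ℕ) < e ∧ p = MvPolynomial.X i})
    (hIdef : I = Ideal.span {MvPolynomial.monomial mu (1 : k)} ⊔ J ^ (r + 1)) :
    ∀ res : Paper.MinGradedFreeRes k (Fin (n + e + 1)) ↥I (Paper.idealDeg k I),
      res.β 0 (r : ℤ) = 1 ∧
      (∀ i : ℕ, i ≤ e - 1 →
        res.β i ((r : ℤ) + 1) =
          (e + r).choose (i + r + 1) * (r + i).choose r - e.choose (i + 1)) ∧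
      (∀ (i : ℕ) (j : ℤ), ¬(i = 0 ∧ j = (r : ℤ)) →
        ¬(i ≤ e - 1 ∧ j = (r : ℤ) + 1) → res.β i j = 0) := by
  intro res
  obtain rfl : mu.degree = r := hmu
  set P : Finset (Fin (n + e + 1)) := {i | (i : ℕ) < e} with hP
  have hcard : P.card = e := by
    rw [Fin.card_filter_val_lt]
    omega
  have hmu₀ : mu ≠ 0 := by
    rintro rfl
    simp at hr
  have hmuP : mu.support ⊆ P := fun i hi => by
    simpa [hP] using mt (hmusupp i) (Finsupp.mem_support_iff.mp hi)
  obtain rfl : J = GradedBetti.varIdeal k P := by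
    simp [hJdef, GradedBetti.varIdeal, hP, Set.image, eq_comm]
  obtain rfl := hIdef.trans (GradedBetti.span_monomial_sup_varIdeal_pow P mu)
  refine ⟨GradedBetti.beta_zero_degree res hmu₀ hmuP, fun i _ => ?_, fun i j h₀ h₁ => ?_⟩
  · have := GradedBetti.cast_beta_degree_add_one res hmu₀ hmuP i
    rw [hcard] at this
    omega
  · exact GradedBetti.beta_eq_zero res hmu₀ hmuP h₀ (by omega)
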